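/- arXiv:1812.10789 — 7 statements merged into one kernel-verified Lean document; each statement's English description precedes it below -/
import Mathlib

section
/- Let (X,f) be a dynamical system on a compact metric space (X,d) with f continuous. If (X,f) is mean equicontinuous, then it has finite separation numbers, i.e. Sep(f,δ,ν) < ∞ for all δ > 0 and ν ∈ (0,1]. -/
open Filter Topology Set MeasureTheory
open scoped ENNReal

noncomputable section

/-- The upper density of a set of natural numbers. -/
def upperDensity (E : Set ℕ) : ℝ :=
  Filter.limsup (fun n : ℕ =>
    (∑ k ∈ Finset.range n, E.indicator (fun _ => (1 : ℝ)) k) / n) Filter.atTop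

/-- `S` is an `(f,δ,ν)`-separated subset of `X`, with respect to the distance `ρ`. -/
def IsSepSet {α : Type*} (ρ : α → α → ℝ) (f : α → α) (X : Set α) (δ ν : ℝ) (S : Set α) : Prop :=
  S ⊆ X ∧ ∀ x ∈ S, ∀ y ∈ S, x ≠ y → ν ≤ upperDensity {k : ℕ | δ ≤ ρ (f^[k] x) (f^[k] y)}

/-- The asymptotic separation number `Sep(f,δ,ν)` of `f` on `X`. -/
def sepNum {α : Type*} (ρ : α → α → ℝ) (f : α → α) (X : Set α) (δ ν : ℝ) : ℕ∞ :=
  ⨆ (S : Set α) (_ : IsSepSet ρ f X δ ν S), S.encard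

/-- The quantity `log s / (- log ν)`, with value `∞` if `s = ∞`. -/
def logRatio (s : ℕ∞) (ν : ℝ) : ℝ≥0∞ :=
  if s = ⊤ then ⊤ else ENNReal.ofReal (Real.log (s.toNat : ℝ) / (- Real.log ν))

/-- The lower amorphic complexity of `f` on `X`. -/
def acLower {α : Type*} (ρ : α → α → ℝ) (f : α → α) (X : Set α) : ℝ≥0∞ :=
  ⨆ (δ : ℝ) (_ : 0 < δ),
    Filter.liminf (fun ν : ℝ => logRatio (sepNum ρ f X δ ν) ν) (𝓝[>] (0 : ℝ))

/-- The upper amorphic complexity of `f` on `X`. -/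
def acUpper {α : Type*} (ρ : α → α → ℝ) (f : α → α) (X : Set α) : ℝ≥0∞ :=
  ⨆ (δ : ℝ) (_ : 0 < δ),
    Filter.limsup (fun ν : ℝ => logRatio (sepNum ρ f X δ ν) ν) (𝓝[>] (0 : ℝ))

/-- The left shift on `A^ℤ`. -/
def shift {A : Type*} (x : ℤ → A) : ℤ → A := fun n => x (n + 1)

open scoped Classical in
/-- The Cantor metric `d(x,y) = 2^{-min{|k| : x_k ≠ y_k}}` on `A^ℤ`. -/
def cantorDist {A : Type*} (x y : ℤ → A) : ℝ :=
  if x = y then 0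
  else (2 : ℝ) ^ (-((sInf {n : ℕ | ∃ k : ℤ, k.natAbs = n ∧ x k ≠ y k} : ℕ) : ℤ))

/-- The Besicovitch pseudometric `D_1` on `A^ℤ`. -/
def besD1 {A : Type*} (x y : ℤ → A) : ℝ :=
  upperDensity {k : ℕ | x (k : ℤ) ≠ y (k : ℤ)}

/-- The Besicovitch pseudometric `D_B` associated to a map `f` and a distance `ρ`. -/
def besDB {α : Type*} (ρ : α → α → ℝ) (f : α → α) (x y : α) : ℝ :=
  Filter.limsup (fun n : ℕ => (∑ k ∈ Finset.range n, ρ (f^[k] x) (f^[k] y)) / n) Filter.atTop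

/-- The pseudometric `D_δ` on `A^ℤ` associated to a metric `ρ` on `A^ℤ`. -/
def Ddelta {A : Type*} (ρ : (ℤ → A) → (ℤ → A) → ℝ) (δ : ℝ) (x y : ℤ → A) : ℝ :=
  upperDensity {k : ℕ | δ ≤ ρ (shift^[k] x) (shift^[k] y)}

/-- The closure of the two-sided shift orbit of `x₀`. -/
def orbitClosure {A : Type*} [TopologicalSpace A] (x₀ : ℤ → A) : Set (ℤ → A) :=
  closure {y | ∃ k : ℤ, y = fun n => x₀ (n + k)}

/-- The extension of a constant length substitution `θ : A → A^ℓ` to `A^ℤ`,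
via `θ(x)_{ℓk+i} = θ(x_k)_i`. -/
def substApply {A : Type*} {ℓ : ℕ} (hℓ : 0 < ℓ) (θ : A → Fin ℓ → A)
    (x : ℤ → A) : ℤ → A := fun n =>
  θ (x (n / (ℓ : ℤ))) ⟨(n % (ℓ : ℤ)).toNat, by
    have h1 : 0 ≤ n % (ℓ : ℤ) := Int.emod_nonneg n (by exact_mod_cast hℓ.ne')
    have h2 : n % (ℓ : ℤ) < (ℓ : ℤ) := Int.emod_lt_of_pos n (by exact_mod_cast hℓ)
    omega⟩

/-- A constant length substitution is primitive if some power `θ^m` of it is such that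
every letter `b` occurs in every word `θ^m(a)`. -/
def IsPrimitive {A : Type*} {ℓ : ℕ} (hℓ : 0 < ℓ) (θ : A → Fin ℓ → A) : Prop :=
  ∃ m : ℕ, 1 ≤ m ∧ ∀ a b : A, ∃ j : ℤ, 0 ≤ j ∧ j < (ℓ : ℤ) ^ m ∧
    (substApply hℓ θ)^[m] (fun _ => a) j = b

open scoped Classical in
/-- The number of positions at which the words `θ(a)` and `θ(b)` agree. -/
def coincCount {A : Type*} {ℓ : ℕ} (θ : A → Fin ℓ → A) (a b : A) : ℕ :=
  (Finset.univ.filter (fun j : Fin ℓ => θ a j = θ b j)).card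

/-- `c(θ)`, the minimum of `coincCount θ a b` over pairs `a ≠ b`. -/
def cMin {A : Type*} {ℓ : ℕ} (θ : A → Fin ℓ → A) : ℕ :=
  sInf {n : ℕ | ∃ a b : A, a ≠ b ∧ coincCount θ a b = n}

/-- `C(θ)`, the maximum of `coincCount θ a b` over pairs `a ≠ b`. -/
def cMax {A : Type*} {ℓ : ℕ} (θ : A → Fin ℓ → A) : ℕ :=
  sSup {n : ℕ | ∃ a b : A, a ≠ b ∧ coincCount θ a b = n}

/-- `S` is `ε`-separated with respect to the distance `ρ`. -/
def IsEpsSeparated {α : Type*} (ρ : α → α → ℝ) (ε : ℝ) (S : Set α) : Prop :=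
  ∀ x ∈ S, ∀ y ∈ S, x ≠ y → ε ≤ ρ x y

/-- `M_ε(E)`: the maximal cardinality of an `ε`-separated subset of `E`. -/
def packNum {α : Type*} (ρ : α → α → ℝ) (ε : ℝ) (E : Set α) : ℕ∞ :=
  ⨆ (S : Set α) (_ : S ⊆ E ∧ IsEpsSeparated ρ ε S), S.encard

/-- The lower box dimension of `E` with respect to the distance `ρ`. -/
def lowerBoxDim {α : Type*} (ρ : α → α → ℝ) (E : Set α) : ℝ≥0∞ :=
  Filter.liminf (fun ε : ℝ => logRatio (packNum ρ ε E) ε) (𝓝[>] (0 : ℝ))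

/-- The upper box dimension of `E` with respect to the distance `ρ`. -/
def upperBoxDim {α : Type*} (ρ : α → α → ℝ) (E : Set α) : ℝ≥0∞ :=
  Filter.limsup (fun ε : ℝ => logRatio (packNum ρ ε E) ε) (𝓝[>] (0 : ℝ))

/-- Mean equicontinuity of `f` on `X` with respect to the distance `ρ`. -/
def MeanEquicontinuousOn {α : Type*} (ρ : α → α → ℝ) (f : α → α) (X : Set α) : Prop :=
  ∀ ν : ℝ, 0 < ν → ∃ δ : ℝ, 0 < δ ∧ ∀ x ∈ X, ∀ y ∈ X, ρ x y < δ → besDB ρ f x y < ν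

/-- The subshift `X` has discrete spectrum: for every shift-invariant Borel probability
measure giving `X` full measure (there is exactly one for the systems under consideration),
`L²` has a Hilbert basis of eigenfunctions of the shift. -/
def HasDiscreteSpectrum {A : Type*} [MeasurableSpace A] (X : Set (ℤ → A)) : Prop :=
  ∀ μ : Measure (ℤ → A), IsProbabilityMeasure μ → MeasurePreserving shift μ μ → μ X = 1 →
    ∃ (ι : Type) (b : HilbertBasis ι ℂ (Lp ℂ 2 μ)), ∀ i : ι, ∃ c : ℂ,
      (fun z => (b i : Lp ℂ 2 μ) (shift z)) =ᵐ[μ] (fun z => c * (b i : Lp ℂ 2 μ) z)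

end
theorem upperDensity_lt_of_besDB_lt {X : Type*} [MetricSpace X] [CompactSpace X] (f : X → X)
    (δ ν : ℝ) (hδ : 0 < δ) (x y : X) (h : besDB dist f x y < δ * ν) :
    upperDensity {k : ℕ | δ ≤ dist (f^[k] x) (f^[k] y)} < ν := by
  obtain ⟨a, ha1, ha2⟩ := exists_between h
  have hbdd : Filter.IsBoundedUnder (· ≤ ·) Filter.atTop
      (fun n : ℕ => (∑ k ∈ Finset.range n, dist (f^[k] x) (f^[k] y)) / n) := by
    refine Filter.isBoundedUnder_of ⟨Metric.diam (Set.univ : Set X), fun n => ?_⟩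
    apply div_le_of_le_mul₀ (Nat.cast_nonneg n) Metric.diam_nonneg
    calc (∑ k ∈ Finset.range n, dist (f^[k] x) (f^[k] y))
        ≤ ∑ k ∈ Finset.range n, Metric.diam (Set.univ : Set X) :=
          Finset.sum_le_sum fun k _ => Metric.dist_le_diam_of_mem
            isCompact_univ.isBounded (Set.mem_univ _) (Set.mem_univ _)
      _ = Metric.diam (Set.univ : Set X) * n := by simp [mul_comm]
  have hev := Filter.eventually_lt_of_limsup_lt ha1 hbdd
  have hlt : a / δ < ν := by
    rw [div_lt_iff₀ hδ]; linarith [mul_comm δ ν]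
  refine lt_of_le_of_lt ?_ hlt
  unfold upperDensity
  refine Filter.limsup_le_of_le ?_ ?_
  · refine Filter.IsBoundedUnder.isCoboundedUnder_le
      (Filter.isBoundedUnder_of ⟨0, fun n => ?_⟩)
    exact div_nonneg (Finset.sum_nonneg fun k _ =>
      Set.indicator_nonneg (fun _ _ => zero_le_one) k) (Nat.cast_nonneg n)
  · filter_upwards [hev] with n hn
    rw [le_div_iff₀ hδ, div_mul_eq_mul_div, Finset.sum_mul]
    refine le_trans ?_ hn.le
    refine div_le_div_of_nonneg_right (Finset.sum_le_sum fun k _ => ?_) (Nat.cast_nonneg n)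
    by_cases hk : δ ≤ dist (f^[k] x) (f^[k] y)
    · rw [Set.indicator_of_mem (by exact hk)]; linarith
    · rw [Set.indicator_of_notMem (by exact hk)]
      simp

/-- A mean equicontinuous dynamical system on a compact metric space
has finite separation numbers. -/
theorem mean_equicontinuous_finite_separation_numbers
    {X : Type*} [MetricSpace X] [CompactSpace X] (f : X → X) (hf : Continuous f)
    (hME : MeanEquicontinuousOn dist f Set.univ) :
    ∀ δ : ℝ, 0 < δ → ∀ ν : ℝ, 0 < ν → ν ≤ 1 → sepNum dist f Set.univ δ ν ≠ ⊤ := by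
  intro δ hδ ν hν _
  obtain ⟨η, hη, hsep⟩ := hME (δ * ν) (mul_pos hδ hν)
  obtain ⟨t, -, htf, hcov⟩ := Metric.totallyBounded_iff.1
    (isCompact_univ (X := X)).totallyBounded (η / 2) (half_pos hη) |>.imp
      (fun t ht => (⟨trivial, ht.1, ht.2⟩ : True ∧ _ ∧ _))
  refine ne_top_of_le_ne_top (Set.encard_ne_top_iff.2 htf) ?_
  refine iSup₂_le fun S hS => ?_
  have hc : ∀ x : X, ∃ c ∈ t, dist x c < η / 2 := by
    intro x
    simpa using hcov (Set.mem_univ x)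
  choose c hct hcd using hc
  refine Set.encard_le_encard_of_injOn (f := c) (fun x _ => hct x) ?_
  intro x hx y hy hxy
  by_contra hne
  have h1 : dist x y < η := by
    have h2 := hcd y
    rw [← hxy] at h2
    linarith [hcd x, dist_triangle_right x y (c x)]
  have h3 := upperDensity_lt_of_besDB_lt f δ ν hδ x y (hsep x trivial y trivial h1)
  linarith [hS.2 x hx y hy hne]
end

section
/- Let (X,f) be a minimal dynamical system on a compact metric space (X,d) with f continuous. Then (X,f) is mean equicontinuous if and only if (X,f) has finite separation numbers. -/
open Filter Topology Set MeasureTheory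
open scoped ENNReal

section AuxLemmas

/-- Averages of a bounded sequence are bounded. -/
lemma aux_avg_le (g : ℕ → ℝ) (D : ℝ) (hD : 0 ≤ D) (h : ∀ k, g k ≤ D) (n : ℕ) :
    (∑ k ∈ Finset.range n, g k) / n ≤ D := by
  rcases Nat.eq_zero_or_pos n with rfl | hn
  · simpa using hD
  · have hn' : (0 : ℝ) < n := by exact_mod_cast hn
    rw [div_le_iff₀ hn']
    calc ∑ k ∈ Finset.range n, g k ≤ ∑ k ∈ Finset.range n, D :=
          Finset.sum_le_sum (fun k _ => h k)
      _ = D * n := by simp [mul_comm]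

lemma aux_avg_nonneg (g : ℕ → ℝ) (h : ∀ k, 0 ≤ g k) (n : ℕ) :
    0 ≤ (∑ k ∈ Finset.range n, g k) / n :=
  div_nonneg (Finset.sum_nonneg (fun k _ => h k)) (Nat.cast_nonneg n)

lemma aux_ev_lt (g : ℕ → ℝ) (D c : ℝ) (hD : 0 ≤ D) (h : ∀ k, g k ≤ D)
    (hl : Filter.limsup (fun n : ℕ => (∑ k ∈ Finset.range n, g k) / n) Filter.atTop < c) :
    ∀ᶠ n : ℕ in atTop, (∑ k ∈ Finset.range n, g k) / n < c :=
  Filter.eventually_lt_of_limsup_lt hl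
    (Filter.isBoundedUnder_of ⟨D, fun n => aux_avg_le g D hD h n⟩)

lemma aux_limsup_le (g : ℕ → ℝ) (c : ℝ) (h : ∀ k, 0 ≤ g k)
    (hl : ∀ᶠ n : ℕ in atTop, (∑ k ∈ Finset.range n, g k) / n ≤ c) :
    Filter.limsup (fun n : ℕ => (∑ k ∈ Finset.range n, g k) / n) Filter.atTop ≤ c :=
  Filter.limsup_le_of_le
    (Filter.IsBoundedUnder.isCoboundedUnder_le
      (Filter.isBoundedUnder_of ⟨0, fun n => aux_avg_nonneg g h n⟩)) hl

/-- In a minimal system every orbit hits every nonempty open set. -/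
lemma aux_orbit_hits {X : Type*} [MetricSpace X] [CompactSpace X] (f : X → X) (hf : Continuous f)
    (hmin : ∀ E : Set X, IsClosed E → f '' E = E → E = ∅ ∨ E = Set.univ)
    (U : Set X) (hU : IsOpen U) (hne : U.Nonempty) (x : X) : ∃ k : ℕ, f^[k] x ∈ U := by
  by_contra! hx
  set K : ℕ → Set X := fun n => closure {y | ∃ k, n ≤ k ∧ y = f^[k] x} with hK
  have hanti : ∀ n, K (n + 1) ⊆ K n := fun n =>
    closure_mono (by rintro y ⟨k, hk, rfl⟩; exact ⟨k, by omega, rfl⟩)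
  have hKne : ∀ n, (K n).Nonempty := fun n => ⟨f^[n] x, subset_closure ⟨n, le_rfl, rfl⟩⟩
  have hKc : ∀ n, IsClosed (K n) := fun n => isClosed_closure
  have himg : ∀ n, f '' K n = K (n + 1) := by
    intro n
    rw [hK]
    simp only
    rw [← hf.isClosedMap.closure_image_eq_of_continuous hf]
    congr 1
    ext y
    constructor
    · rintro ⟨z, ⟨k, hk, rfl⟩, rfl⟩
      exact ⟨k + 1, by omega, (Function.iterate_succ_apply' f k x).symm⟩
    · rintro ⟨k, hk, rfl⟩
      obtain ⟨j, rfl⟩ : ∃ j, k = j + 1 := ⟨k - 1, by omega⟩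
      exact ⟨f^[j] x, ⟨j, by omega, rfl⟩, (Function.iterate_succ_apply' f j x).symm⟩
  have hE := hmin (⋂ n, K n) (isClosed_iInter hKc) (by
    apply Set.Subset.antisymm
    · rintro _ ⟨z, hz, rfl⟩
      rw [Set.mem_iInter] at hz ⊢
      intro n
      exact hanti n (by rw [← himg n]; exact ⟨z, hz n, rfl⟩)
    · intro y hy
      rw [Set.mem_iInter] at hy
      have hcl : ∀ n, IsClosed (K n ∩ f ⁻¹' {y}) := fun n =>
        (hKc n).inter (isClosed_singleton.preimage hf)
      obtain ⟨z, hz⟩ := IsCompact.nonempty_iInter_of_sequence_nonempty_isCompact_isClosed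
        (fun n => K n ∩ f ⁻¹' {y})
        (fun n => Set.inter_subset_inter_left _ (hanti n))
        (fun n => by
          have h := hy (n + 1)
          rw [← himg n] at h
          obtain ⟨z, hz, hzy⟩ := h
          exact ⟨z, hz, hzy⟩)
        (hcl 0).isCompact hcl
      rw [Set.mem_iInter] at hz
      exact ⟨z, Set.mem_iInter.2 fun n => (hz n).1, (hz 0).2⟩)
  have hEne : (⋂ n, K n).Nonempty :=
    IsCompact.nonempty_iInter_of_sequence_nonempty_isCompact_isClosed K hanti hKne
      (hKc 0).isCompact hKc
  have hEu := hE.resolve_left hEne.ne_empty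
  obtain ⟨u, hu⟩ := hne
  have hu0 : u ∈ K 0 := by
    have : u ∈ ⋂ n, K n := by rw [hEu]; trivial
    exact Set.mem_iInter.1 this 0
  obtain ⟨_, hy, k, _, rfl⟩ := mem_closure_iff.1 hu0 U hU hu
  exact hx k hy

/-- Large upper density of separation times forces a large `besDB`. -/
lemma aux_forward {X : Type*} [MetricSpace X] [CompactSpace X] (f : X → X)
    (h : MeanEquicontinuousOn dist f Set.univ) (δ : ℝ) (hδ : 0 < δ) (ν : ℝ) (hν : 0 < ν) :
    sepNum dist f Set.univ δ ν ≠ ⊤ := by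
  obtain ⟨η, hη, hmec⟩ := h (δ * ν) (mul_pos hδ hν)
  obtain ⟨D, hD⟩ : ∃ D : ℝ, ∀ x y : X, dist x y ≤ D := by
    obtain ⟨D, hD⟩ := Metric.isBounded_iff.1 (isCompact_univ (X := X)).isBounded
    exact ⟨D, fun x y => hD trivial trivial⟩
  have key : ∀ x y : X, dist x y < η →
      upperDensity {k : ℕ | δ ≤ dist (f^[k] x) (f^[k] y)} < ν := by
    intro x y hxy
    have h1 := hmec x trivial y trivial hxy
    obtain ⟨c, hc1, hc2⟩ := exists_between h1
    have hD0 : 0 ≤ D := dist_nonneg.trans (hD x y)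
    have h2 := aux_ev_lt (fun k => dist (f^[k] x) (f^[k] y)) D c hD0 (fun k => hD _ _) hc1
    have h3 : upperDensity {k : ℕ | δ ≤ dist (f^[k] x) (f^[k] y)} ≤ c / δ := by
      apply aux_limsup_le
      · intro k
        exact Set.indicator_nonneg (fun _ _ => zero_le_one) _
      · filter_upwards [h2] with n hn
        rw [le_div_iff₀ hδ]
        refine le_trans ?_ hn.le
        rw [div_mul_eq_mul_div, Finset.sum_mul]
        apply div_le_div_of_nonneg_right _ (Nat.cast_nonneg n)
        apply Finset.sum_le_sum
        intro k _
        by_cases hk : δ ≤ dist (f^[k] x) (f^[k] y)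
        · simpa [Set.indicator, hk] using hk
        · simp [Set.indicator, hk]
    refine lt_of_le_of_lt h3 ?_
    rw [div_lt_iff₀ hδ]
    linarith [mul_comm δ ν]
  obtain ⟨t, -, htfin, ht⟩ := (isCompact_univ (X := X)).finite_cover_balls (half_pos hη)
  have hle : sepNum dist f Set.univ δ ν ≤ t.encard := by
    refine iSup₂_le fun S hS => ?_
    have hch : ∀ x : X, ∃ c ∈ t, dist x c < η / 2 := by
      intro x
      have := ht (Set.mem_univ x)
      simpa using this
    choose g hg hgd using hch
    refine Set.encard_le_encard_of_injOn (f := g) (fun x _ => hg x) ?_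
    intro x hx y hy hxy
    by_contra hne
    have h1 := hS.2 x hx y hy hne
    have h2 : dist x y < η := by
      have h3 := hgd x
      have h4 := hgd y
      rw [← hxy] at h4
      have := dist_triangle_right x y (g x)
      linarith
    exact absurd (key x y h2) (not_lt.2 h1)
  intro htop
  rw [htop, top_le_iff] at hle
  exact htfin.encard_lt_top.ne hle

/-- Finite separation numbers give finite nets. -/
lemma aux_net {X : Type*} [MetricSpace X] (f : X → X) (δ ν : ℝ) (hδ : 0 < δ) (hν : 0 < ν)
    (h : sepNum dist f Set.univ δ ν ≠ ⊤) :
    ∃ S : Set X, S.Finite ∧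
      ∀ x, ∃ y ∈ S, upperDensity {k : ℕ | δ ≤ dist (f^[k] x) (f^[k] y)} < ν := by
  obtain ⟨S, hS⟩ := zorn_subset {S : Set X | IsSepSet dist f Set.univ δ ν S} (by
    intro c hc hchain
    refine ⟨⋃₀ c, ⟨Set.subset_univ _, ?_⟩, fun s hs => Set.subset_sUnion_of_mem hs⟩
    rintro x ⟨s, hs, hxs⟩ y ⟨t, ht, hyt⟩ hne
    rcases hchain.total hs ht with hst | hts
    · exact (hc ht).2 x (hst hxs) y hyt hne
    · exact (hc hs).2 x hxs y (hts hyt) hne)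
  have hSs : IsSepSet dist f Set.univ δ ν S := hS.prop
  refine ⟨S, ?_, ?_⟩
  · rw [← Set.encard_lt_top_iff]
    refine lt_of_le_of_lt ?_ (lt_top_iff_ne_top.2 h)
    exact le_iSup₂_of_le (f := fun (S : Set X) (_ : IsSepSet dist f Set.univ δ ν S) => S.encard)
      S hSs le_rfl
  · intro x
    by_cases hx : x ∈ S
    · refine ⟨x, hx, ?_⟩
      have : {k : ℕ | δ ≤ dist (f^[k] x) (f^[k] x)} = ∅ := by
        ext k
        simp [hδ]
      rw [this]
      simpa [upperDensity] using hν
    · by_contra! hno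
      apply hx
      have hins : IsSepSet dist f Set.univ δ ν (insert x S) := by
        refine ⟨Set.subset_univ _, ?_⟩
        rintro a (rfl | ha) b (rfl | hb) hab
        · exact absurd rfl hab
        · exact hno b hb
        · simpa only [dist_comm] using hno a ha
        · exact hSs.2 a ha b hb hab
      exact hS.le_of_ge hins (Set.subset_insert x S) (Set.mem_insert x S)

lemma aux_backward {X : Type*} [MetricSpace X] [CompactSpace X] (f : X → X) (hf : Continuous f)
    (hmin : ∀ E : Set X, IsClosed E → f '' E = E → E = ∅ ∨ E = Set.univ)
    (h : ∀ δ : ℝ, 0 < δ → ∀ ν : ℝ, 0 < ν → ν ≤ 1 → sepNum dist f Set.univ δ ν ≠ ⊤) :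
    MeanEquicontinuousOn dist f Set.univ := by
  intro ε hε
  rcases isEmpty_or_nonempty X with hX | hX
  · exact ⟨1, one_pos, fun x => (hX.false x).elim⟩
  obtain ⟨D, hD0, hD⟩ : ∃ D : ℝ, 0 < D ∧ ∀ x y : X, dist x y ≤ D := by
    obtain ⟨D, hD⟩ := Metric.isBounded_iff.1 (isCompact_univ (X := X)).isBounded
    exact ⟨max D 1, by positivity, fun x y => (hD trivial trivial).trans (le_max_left _ _)⟩
  set η := ε / 4 with hη
  have hη0 : 0 < η := by positivity
  set ν := min 1 (η / (2 * D)) with hν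
  have hν0 : 0 < ν := lt_min one_pos (by positivity)
  have hνD : D * ν ≤ η / 2 := by
    calc D * ν ≤ D * (η / (2 * D)) := by gcongr; exact min_le_right _ _
      _ = η / 2 := by field_simp
  obtain ⟨S, hSfin, hS⟩ := aux_net f (η / 2) ν (half_pos hη0) hν0
    (h (η / 2) (half_pos hη0) ν hν0 (min_le_left _ _))
  have hScount : Countable S := hSfin.countable.to_subtype
  have hit : ∀ k, Continuous f^[k] := fun k => hf.iterate k
  let F : S × ℕ → Set X := fun p =>
    ⋂ (n : ℕ) (_ : p.2 ≤ n), {x | ∑ k ∈ Finset.range n, dist (f^[k] x) (f^[k] p.1) ≤ η * n}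
  have hFc : ∀ p, IsClosed (F p) := fun p =>
    isClosed_iInter fun n => isClosed_iInter fun _ =>
      isClosed_le (continuous_finsetSum _ fun k _ => (hit k).dist continuous_const)
        continuous_const
  have hFu : ⋃ p, F p = Set.univ := by
    rw [Set.eq_univ_iff_forall]
    intro x
    obtain ⟨y, hy, hd⟩ := hS x
    have hev := aux_ev_lt _ 1 ν zero_le_one (fun k => by
      apply Set.indicator_le_self' (f := fun _ => (1 : ℝ)) (fun _ _ => zero_le_one)) hd
    obtain ⟨N, hN⟩ := eventually_atTop.1 (hev.and (eventually_gt_atTop 0))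
    refine Set.mem_iUnion.2 ⟨(⟨y, hy⟩, N), ?_⟩
    refine Set.mem_iInter₂.2 fun n hn => ?_
    obtain ⟨h1, h2⟩ := hN n hn
    have hn0 : (0 : ℝ) < n := by exact_mod_cast h2
    rw [div_lt_iff₀ hn0] at h1
    show ∑ k ∈ Finset.range n, dist (f^[k] x) (f^[k] y) ≤ η * n
    calc ∑ k ∈ Finset.range n, dist (f^[k] x) (f^[k] y)
        ≤ ∑ k ∈ Finset.range n, (η / 2 + D *
          ({k : ℕ | η / 2 ≤ dist (f^[k] x) (f^[k] y)}).indicator (fun _ => (1 : ℝ)) k) := by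
          apply Finset.sum_le_sum
          intro k _
          by_cases hk : η / 2 ≤ dist (f^[k] x) (f^[k] y)
          · simp only [Set.indicator, Set.mem_setOf_eq, hk, if_true]
            linarith [hD (f^[k] x) (f^[k] y)]
          · simp only [Set.indicator, Set.mem_setOf_eq, hk, if_false]
            linarith
      _ = η / 2 * n + D * ∑ k ∈ Finset.range n,
          ({k : ℕ | η / 2 ≤ dist (f^[k] x) (f^[k] y)}).indicator (fun _ => (1 : ℝ)) k := by
          rw [Finset.sum_add_distrib, Finset.mul_sum]
          simp [mul_comm]
      _ ≤ η / 2 * n + D * (ν * n) := by gcongr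
      _ = η / 2 * n + (D * ν) * n := by ring
      _ ≤ η / 2 * n + η / 2 * n := by gcongr
      _ = η * n := by ring
  obtain ⟨⟨z, N⟩, hint⟩ := nonempty_interior_of_iUnion_of_closed hFc hFu
  set U := interior (F (z, N)) with hU
  have hUp : ∀ x ∈ U, ∀ y ∈ U, ∀ n, N ≤ n →
      ∑ k ∈ Finset.range n, dist (f^[k] x) (f^[k] y) ≤ 2 * η * n := by
    intro x hx y hy n hn
    have hx' : ∑ k ∈ Finset.range n, dist (f^[k] x) (f^[k] z) ≤ η * n :=
      Set.mem_iInter₂.1 (interior_subset hx) n hn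
    have hy' : ∑ k ∈ Finset.range n, dist (f^[k] y) (f^[k] z) ≤ η * n :=
      Set.mem_iInter₂.1 (interior_subset hy) n hn
    have := Finset.sum_le_sum (s := Finset.range n)
      (fun k _ => dist_triangle_right (f^[k] x) (f^[k] y) (f^[k] z))
    rw [Finset.sum_add_distrib] at this
    linarith
  obtain ⟨δ, hδ, hleb⟩ := lebesgue_number_lemma_of_metric (isCompact_univ (X := X))
    (c := fun k : ℕ => f^[k] ⁻¹' U) (fun k => isOpen_interior.preimage (hit k))
    (fun x _ => by
      obtain ⟨k, hk⟩ := aux_orbit_hits f hf hmin U isOpen_interior hint x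
      exact Set.mem_iUnion.2 ⟨k, hk⟩)
  refine ⟨δ, hδ, fun x _ y _ hxy => ?_⟩
  obtain ⟨m, hm⟩ := hleb x trivial
  have hxU : f^[m] x ∈ U := hm (Metric.mem_ball_self hδ)
  have hyU : f^[m] y ∈ U := hm (by rw [Metric.mem_ball, dist_comm]; exact hxy)
  have hle : besDB dist f x y ≤ 3 * η := by
    apply aux_limsup_le
    · exact fun k => dist_nonneg
    · obtain ⟨M, hM⟩ := exists_nat_gt (m * D / η)
      filter_upwards [eventually_ge_atTop (N + m + M + 1)] with n hn
      obtain ⟨j, rfl⟩ : ∃ j, n = m + j := ⟨n - m, by omega⟩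
      have hpos : (0 : ℝ) < ((m + j : ℕ) : ℝ) := by
        exact_mod_cast (by omega : 0 < m + j)
      rw [div_le_iff₀ hpos, Finset.sum_range_add]
      have h1 : ∑ k ∈ Finset.range m, dist (f^[k] x) (f^[k] y) ≤ m * D := by
        calc _ ≤ ∑ k ∈ Finset.range m, D := Finset.sum_le_sum fun k _ => hD _ _
          _ = m * D := by simp
      have h2 : ∑ k ∈ Finset.range j, dist (f^[m + k] x) (f^[m + k] y) ≤ 2 * η * j := by
        have := hUp _ hxU _ hyU j (by omega)
        simpa only [← Function.iterate_add_apply, add_comm _ m] using this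
      have h3 : (m : ℝ) * D ≤ η * j := by
        rw [div_lt_iff₀ hη0] at hM
        have : (M : ℝ) ≤ j := by exact_mod_cast (by omega : M ≤ j)
        nlinarith
      have h4 : 0 ≤ η * m := by positivity
      push_cast
      nlinarith
  linarith

end AuxLemmas

/-- A minimal dynamical system on a compact metric space is mean
equicontinuous if and only if it has finite separation numbers. -/
theorem minimal_mean_equicontinuous_iff_finite_separation_numbers
    {X : Type*} [MetricSpace X] [CompactSpace X] (f : X → X) (hf : Continuous f)
    (hmin : ∀ E : Set X, IsClosed E → f '' E = E → E = ∅ ∨ E = Set.univ) :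
    MeanEquicontinuousOn dist f Set.univ ↔
      (∀ δ : ℝ, 0 < δ → ∀ ν : ℝ, 0 < ν → ν ≤ 1 → sepNum dist f Set.univ δ ν ≠ ⊤) := by
  exact ⟨fun h δ hδ ν hν _ => aux_forward f h δ hδ ν hν, aux_backward f hf hmin⟩
end

section
/- Let (X,σ) be a subshift of Σ = A^ℤ (with the Cantor metric) having finite separation numbers. Then for every δ ∈ (0,1] the lower and upper box dimensions of [X] in ([Σ],D_δ) are independent of δ, and moreover ac_(σ|_X) = dim_B^-([X]) and ac¯(σ|_X) = dim_B^+([X]), where the box dimensions are taken with respect to D_1. -/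
open Filter Topology Set MeasureTheory
open scoped ENNReal

lemma bes_shift_iter {A : Type*} (x : ℤ → A) (k : ℕ) (j : ℤ) : shift^[k] x j = x (j + k) := by
  induction k generalizing x with
  | zero => simp
  | succ n ih =>
    rw [Function.iterate_succ_apply, ih]
    simp only [shift]
    congr 1
    push_cast
    ring

lemma bes_one_le {A : Type*} {x y : ℤ → A} (h : x 0 ≠ y 0) : 1 ≤ cantorDist x y := by
  have hxy : x ≠ y := fun e => h (by rw [e])
  have h0 : sInf {n : ℕ | ∃ k : ℤ, k.natAbs = n ∧ x k ≠ y k} = 0 := by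
    rw [Nat.sInf_eq_zero]
    left
    exact ⟨0, rfl, h⟩
  simp [cantorDist, hxy, h0]

lemma bes_exists {A : Type*} {x y : ℤ → A} {δ : ℝ} {N : ℕ} (hδ : 0 < δ)
    (hN : (1 / 2 : ℝ) ^ N < δ) (h : δ ≤ cantorDist x y) :
    ∃ j ∈ Finset.Icc (-(N : ℤ)) N, x j ≠ y j := by
  unfold cantorDist at h
  split_ifs at h with hxy
  · linarith
  · have hne : {n : ℕ | ∃ k : ℤ, k.natAbs = n ∧ x k ≠ y k}.Nonempty := by
      obtain ⟨k, hk⟩ := Function.ne_iff.mp hxy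
      exact ⟨_, k, rfl, hk⟩
    obtain ⟨k, hk, hk2⟩ := Nat.sInf_mem hne
    refine ⟨k, ?_, hk2⟩
    rw [← hk] at h
    have h3 : (1 / 2 : ℝ) ^ N < (1 / 2 : ℝ) ^ k.natAbs := by
      refine hN.trans_le (h.trans_eq ?_)
      rw [zpow_neg, zpow_natCast, one_div, inv_pow]
    have h4 : k.natAbs < N :=
      (pow_lt_pow_iff_right_of_lt_one₀ (by norm_num) (by norm_num)).mp h3
    rw [Finset.mem_Icc]
    omega

lemma bes_sum_shift (j : ℕ) (F : ℤ → ℝ) (h0 : ∀ k, 0 ≤ F k) (h1 : ∀ k, F k ≤ 1) (n : ℕ) :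
    ∑ k ∈ Finset.range n, F (k + j) ≤ ∑ k ∈ Finset.range n, F k + j ∧
    ∑ k ∈ Finset.range n, F (k - j) ≤ ∑ k ∈ Finset.range n, F k + j := by
  induction j generalizing F with
  | zero => simp
  | succ j ih =>
    constructor
    · have h := (ih (fun k => F (k + 1)) (fun _ => h0 _) (fun _ => h1 _)).1
      have e1 := Finset.sum_range_succ (fun k : ℕ => F k) n
      rw [Finset.sum_range_succ'] at e1
      have e2 := h0 ((0 : ℕ) : ℤ)
      have e3 := h1 (n : ℤ)
      push_cast at *
      simp only [add_assoc] at *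
      linarith
    · have h := (ih (fun k => F (k - 1)) (fun _ => h0 _) (fun _ => h1 _)).2
      have e1 := Finset.sum_range_succ (fun k : ℕ => F (k - 1)) n
      rw [Finset.sum_range_succ'] at e1
      have e2 := h1 (((0 : ℕ) : ℤ) - 1)
      have e3 := h0 ((n : ℤ) - 1)
      push_cast at *
      simp only [add_sub_cancel_right, sub_sub] at *
      linarith

lemma bes_avg_bd (E : Set ℕ) (n : ℕ) :
    0 ≤ (∑ k ∈ Finset.range n, E.indicator (fun _ => (1 : ℝ)) k) / n ∧
    (∑ k ∈ Finset.range n, E.indicator (fun _ => (1 : ℝ)) k) / n ≤ 1 := by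
  constructor
  · exact div_nonneg (Finset.sum_nonneg fun k _ =>
      Set.indicator_nonneg (fun _ _ => zero_le_one) k) (Nat.cast_nonneg n)
  · refine div_le_one_of_le₀ ?_ (Nat.cast_nonneg n)
    calc _ ≤ ∑ k ∈ Finset.range n, (1 : ℝ) :=
          Finset.sum_le_sum fun k _ => Set.indicator_le_self' (fun _ _ => zero_le_one) k
      _ = n := by simp

lemma bes_isBdd (E : Set ℕ) : IsBoundedUnder (· ≤ ·) atTop (fun n : ℕ =>
    (∑ k ∈ Finset.range n, E.indicator (fun _ => (1 : ℝ)) k) / n) :=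
  isBoundedUnder_of ⟨1, fun n => (bes_avg_bd E n).2⟩

lemma bes_isCobdd (E : Set ℕ) : IsCoboundedUnder (· ≤ ·) atTop (fun n : ℕ =>
    (∑ k ∈ Finset.range n, E.indicator (fun _ => (1 : ℝ)) k) / n) :=
  (isBoundedUnder_of (r := (· ≥ ·)) ⟨0, fun n => (bes_avg_bd E n).1⟩).isCoboundedUnder_le

lemma bes_ud_mono {E F : Set ℕ} (h : E ⊆ F) : upperDensity E ≤ upperDensity F := by
  refine limsup_le_limsup (Eventually.of_forall fun n => ?_) (bes_isCobdd E) (bes_isBdd F)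
  refine div_le_div_of_nonneg_right (Finset.sum_le_sum fun k _ => ?_) (Nat.cast_nonneg n)
  exact Set.indicator_le_indicator_of_subset h (fun _ => zero_le_one) k

lemma bes_ud_le {E F : Set ℕ} (C B : ℝ) (hC : 0 < C)
    (h : ∀ n : ℕ, ∑ k ∈ Finset.range n, E.indicator (fun _ => (1 : ℝ)) k ≤
      C * ∑ k ∈ Finset.range n, F.indicator (fun _ => (1 : ℝ)) k + B) :
    upperDensity E ≤ C * upperDensity F := by
  refine le_of_forall_pos_le_add fun η hη => ?_
  have h1 : ∀ᶠ n : ℕ in atTop,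
      (∑ k ∈ Finset.range n, F.indicator (fun _ => (1 : ℝ)) k) / n <
        upperDensity F + η / (2 * C) := by
    refine eventually_lt_of_limsup_lt ?_ (bes_isBdd F)
    have : 0 < η / (2 * C) := by positivity
    unfold upperDensity
    linarith
  have h2 : ∀ᶠ n : ℕ in atTop, B / n < η / 2 :=
    (tendsto_const_div_atTop_nhds_zero_nat B).eventually_lt_const (by positivity)
  refine limsup_le_of_le (bes_isCobdd E) ?_
  filter_upwards [h1, h2] with n hn1 hn2
  calc _ ≤ (C * ∑ k ∈ Finset.range n, F.indicator (fun _ => (1 : ℝ)) k + B) / n :=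
        div_le_div_of_nonneg_right (h n) (Nat.cast_nonneg n)
    _ = C * ((∑ k ∈ Finset.range n, F.indicator (fun _ => (1 : ℝ)) k) / n) + B / n := by ring
    _ ≤ C * (upperDensity F + η / (2 * C)) + η / 2 := by gcongr
    _ = _ := by field_simp; ring

lemma bes_D_anti {A : Type*} {δ δ' : ℝ} (h : δ ≤ δ') (x y : ℤ → A) :
    Ddelta cantorDist δ' x y ≤ Ddelta cantorDist δ x y :=
  bes_ud_mono fun _ hk => h.trans hk

lemma bes_D_le {A : Type*} {δ : ℝ} (hδ : 0 < δ) : ∃ C : ℝ, 1 ≤ C ∧ ∀ x y : ℤ → A,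
    Ddelta cantorDist δ x y ≤ C * Ddelta cantorDist 1 x y := by
  obtain ⟨N, hN⟩ := exists_pow_lt_of_lt_one hδ (by norm_num : (1 / 2 : ℝ) < 1)
  have hC : 1 ≤ ((Finset.Icc (-(N : ℤ)) N).card : ℝ) := by
    rw [Int.card_Icc]
    norm_cast
    omega
  refine ⟨((Finset.Icc (-(N : ℤ)) N).card : ℝ), hC, fun x y => ?_⟩
  refine bes_ud_le _ ((Finset.Icc (-(N : ℤ)) N).card * N) (by linarith) fun n => ?_
  set F : ℤ → ℝ := {k : ℤ | x k ≠ y k}.indicator (fun _ => (1 : ℝ)) with hF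
  have F0 : ∀ k, 0 ≤ F k := fun k => Set.indicator_nonneg (fun _ _ => zero_le_one) k
  have F1 : ∀ k, F k ≤ 1 := fun k => Set.indicator_le_self' (fun _ _ => zero_le_one) k
  have s1 : ∑ k ∈ Finset.range n,
      {k : ℕ | δ ≤ cantorDist (shift^[k] x) (shift^[k] y)}.indicator (fun _ => (1 : ℝ)) k ≤
      ∑ k ∈ Finset.range n, ∑ j ∈ Finset.Icc (-(N : ℤ)) N, F (k + j) := by
    refine Finset.sum_le_sum fun k _ => ?_
    by_cases hk : δ ≤ cantorDist (shift^[k] x) (shift^[k] y)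
    · rw [Set.indicator_of_mem (show k ∈ {k : ℕ | δ ≤ cantorDist (shift^[k] x) (shift^[k] y)} from hk)]
      obtain ⟨j, hj, hne⟩ := bes_exists hδ hN hk
      rw [bes_shift_iter, bes_shift_iter, add_comm] at hne
      refine le_trans (le_of_eq ?_) (Finset.single_le_sum (f := fun j : ℤ => F (k + j))
        (fun j _ => F0 _) hj)
      simp only [hF]
      rw [Set.indicator_of_mem]
      exact hne
    · rw [Set.indicator_of_notMem (show k ∉ {k : ℕ | δ ≤ cantorDist (shift^[k] x) (shift^[k] y)} from hk)]
      exact Finset.sum_nonneg fun j _ => F0 _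
  have s2 : ∀ j ∈ Finset.Icc (-(N : ℤ)) N, ∑ k ∈ Finset.range n, F (k + j) ≤
      ∑ k ∈ Finset.range n, F k + N := by
    intro j hj
    rw [Finset.mem_Icc] at hj
    have hb := bes_sum_shift j.natAbs F F0 F1 n
    have hjN : (j.natAbs : ℝ) ≤ N := by
      have : j.natAbs ≤ N := by omega
      exact_mod_cast this
    rcases le_total 0 j with h | h
    · rw [Int.natAbs_of_nonneg h] at hb
      linarith [hb.1]
    · have e : (j.natAbs : ℤ) = -j := by omega
      rw [e] at hb
      simp only [sub_neg_eq_add] at hb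
      linarith [hb.2]
  have s3 : ∑ k ∈ Finset.range n, F k ≤ ∑ k ∈ Finset.range n,
      {k : ℕ | 1 ≤ cantorDist (shift^[k] x) (shift^[k] y)}.indicator (fun _ => (1 : ℝ)) k := by
    refine Finset.sum_le_sum fun k _ => ?_
    by_cases hk : x k = y k
    · have : F k = 0 := Set.indicator_of_notMem (by simpa using hk) _
      rw [this]
      exact Set.indicator_nonneg (fun _ _ => zero_le_one) k
    · rw [Set.indicator_of_mem]
      · exact F1 _
      · refine bes_one_le ?_
        simpa [bes_shift_iter] using hk
  rw [Finset.sum_comm] at s1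
  have s4 := Finset.sum_le_sum s2
  rw [Finset.sum_const, nsmul_eq_mul] at s4
  have s5 : ((Finset.Icc (-(N : ℤ)) N).card : ℝ) * ∑ k ∈ Finset.range n, F k ≤ _ :=
    mul_le_mul_of_nonneg_left s3 (by linarith)
  linarith

lemma bes_pack_le {α : Type*} {ρ ρ' : α → α → ℝ} {C : ℝ} (hC : 0 < C)
    (h : ∀ x y, ρ x y ≤ C * ρ' x y) (E : Set α) (ε : ℝ) :
    packNum ρ ε E ≤ packNum ρ' (C⁻¹ * ε) E := by
  refine iSup₂_le fun S hS => ?_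
  refine le_iSup₂_of_le S ⟨hS.1, fun x hx y hy hxy => ?_⟩ le_rfl
  rw [inv_mul_le_iff₀ hC]
  exact (hS.2 x hx y hy hxy).trans (h x y)

lemma bes_logRatio (c : ℝ) (hc : 0 < c) (hc1 : c ≤ 1) (a : ℝ≥0∞) (ha : a < 1) :
    ∀ᶠ ε in 𝓝[>] (0 : ℝ), ∀ s t : ℕ∞, s ≤ t → a * logRatio s ε ≤ logRatio t (c * ε) := by
  have hat : a ≠ ⊤ := (ha.trans ENNReal.one_lt_top).ne
  obtain ⟨r, hr, rfl⟩ : ∃ r : ℝ, 0 ≤ r ∧ a = ENNReal.ofReal r :=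
    ⟨a.toReal, ENNReal.toReal_nonneg, (ENNReal.ofReal_toReal hat).symm⟩
  have hr1 : r < 1 := by simpa using ha
  have hlog : Tendsto (fun ε : ℝ => (1 - r) * -Real.log ε) (𝓝[>] 0) atTop :=
    (tendsto_neg_atBot_atTop.comp Real.tendsto_log_nhdsGT_zero).const_mul_atTop (by linarith)
  have hlt : ∀ᶠ ε in 𝓝[>] (0 : ℝ), ε < 1 :=
    eventually_nhdsWithin_of_eventually_nhds (eventually_lt_nhds one_pos)
  filter_upwards [hlt, hlog.eventually_ge_atTop (r * -Real.log c), self_mem_nhdsWithin]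
    with ε h1 h2 h0 s t hst
  rw [Set.mem_Ioi] at h0
  unfold logRatio
  by_cases ht : t = ⊤
  · simp [ht]
  have hs : s ≠ ⊤ := ne_top_of_le_ne_top ht hst
  rw [if_neg hs, if_neg ht, ← ENNReal.ofReal_mul hr]
  apply ENNReal.ofReal_le_ofReal
  have hle : Real.log (s.toNat : ℝ) ≤ Real.log (t.toNat : ℝ) := by
    have hn : s.toNat ≤ t.toNat := ENat.toNat_le_toNat hst ht
    rcases Nat.eq_zero_or_pos s.toNat with h | h
    · rw [h]
      simpa using Real.log_natCast_nonneg t.toNat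
    · exact Real.log_le_log (by exact_mod_cast h) (by exact_mod_cast hn)
  have hs0 : 0 ≤ Real.log (s.toNat : ℝ) := Real.log_natCast_nonneg _
  have hε : Real.log ε < 0 := Real.log_neg h0 h1
  have hlc : Real.log c ≤ 0 := Real.log_nonpos hc.le hc1
  rw [Real.log_mul hc.ne' h0.ne', ← mul_div_assoc, div_le_div_iff₀ (by linarith) (by linarith)]
  have k1 : r * -(Real.log c + Real.log ε) ≤ -Real.log ε := by nlinarith
  calc _ = Real.log (s.toNat : ℝ) * (r * -(Real.log c + Real.log ε)) := by ring
    _ ≤ Real.log (s.toNat : ℝ) * -Real.log ε := by gcongr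
    _ ≤ _ := mul_le_mul_of_nonneg_right hle (by linarith)

lemma bes_map (c : ℝ) (hc : 0 < c) : map (fun ε : ℝ => c * ε) (𝓝[>] 0) = 𝓝[>] (0 : ℝ) := by
  conv_lhs => rw [← comap_mulLeft_nhdsGT_zero hc]
  exact map_comap_of_surjective (mul_left_surjective₀ hc.ne') _

lemma bes_lim {g f : ℝ → ℕ∞} {C : ℝ} (hC : 1 ≤ C) (h : ∀ ε, g ε ≤ f (C⁻¹ * ε)) :
    liminf (fun ε => logRatio (g ε) ε) (𝓝[>] (0 : ℝ)) ≤
      liminf (fun ε => logRatio (f ε) ε) (𝓝[>] (0 : ℝ)) ∧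
    limsup (fun ε => logRatio (g ε) ε) (𝓝[>] (0 : ℝ)) ≤
      limsup (fun ε => logRatio (f ε) ε) (𝓝[>] (0 : ℝ)) := by
  have hC0 : 0 < C⁻¹ := by positivity
  have key : ∀ a : ℝ≥0∞, a < 1 → ∀ᶠ ε in 𝓝[>] (0 : ℝ),
      a * logRatio (g ε) ε ≤ logRatio (f (C⁻¹ * ε)) (C⁻¹ * ε) := fun a ha =>
    (bes_logRatio C⁻¹ hC0 (inv_le_one_of_one_le₀ hC) a ha).mono fun ε hε => hε _ _ (h ε)
  constructor
  · refine ENNReal.le_of_forall_lt_one_mul_le fun a ha => ?_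
    rw [← ENNReal.liminf_const_mul_of_ne_top (ha.trans ENNReal.one_lt_top).ne]
    refine (liminf_le_liminf (key a ha)).trans_eq ?_
    conv_rhs => rw [← bes_map C⁻¹ hC0]
    exact (liminf_comp (fun ε => logRatio (f ε) ε) (fun ε => C⁻¹ * ε) (𝓝[>] (0 : ℝ)))
  · refine ENNReal.le_of_forall_lt_one_mul_le fun a ha => ?_
    rw [← ENNReal.limsup_const_mul_of_ne_top (ha.trans ENNReal.one_lt_top).ne]
    refine (limsup_le_limsup (key a ha)).trans_eq ?_
    conv_rhs => rw [← bes_map C⁻¹ hC0]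
    exact (limsup_comp (fun ε => logRatio (f ε) ε) (fun ε => C⁻¹ * ε) (𝓝[>] (0 : ℝ)))

lemma bes_dim_le {α : Type*} {ρ ρ' : α → α → ℝ} {C : ℝ} (hC : 1 ≤ C)
    (h : ∀ x y, ρ x y ≤ C * ρ' x y) (E : Set α) :
    lowerBoxDim ρ E ≤ lowerBoxDim ρ' E ∧ upperBoxDim ρ E ≤ upperBoxDim ρ' E :=
  bes_lim (g := fun ε => packNum ρ ε E) (f := fun ε => packNum ρ' ε E) hC
    fun ε => bes_pack_le (by linarith) h E ε

lemma bes_dim_le_one {A : Type*} {δ : ℝ} (hδ : 0 < δ) (X : Set (ℤ → A)) :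
    lowerBoxDim (Ddelta cantorDist δ) X ≤ lowerBoxDim (Ddelta cantorDist 1) X ∧
    upperBoxDim (Ddelta cantorDist δ) X ≤ upperBoxDim (Ddelta cantorDist 1) X := by
  obtain ⟨C, hC, h⟩ := bes_D_le (A := A) hδ
  exact bes_dim_le hC h X

lemma bes_dim_eq_one {A : Type*} {δ : ℝ} (hδ : 0 < δ) (hδ1 : δ ≤ 1) (X : Set (ℤ → A)) :
    lowerBoxDim (Ddelta cantorDist δ) X = lowerBoxDim (Ddelta cantorDist 1) X ∧
    upperBoxDim (Ddelta cantorDist δ) X = upperBoxDim (Ddelta cantorDist 1) X := by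
  have h1 := bes_dim_le_one hδ X
  have h2 := bes_dim_le (ρ := Ddelta cantorDist 1) (ρ' := Ddelta cantorDist δ) le_rfl
    (fun x y => by rw [one_mul]; exact bes_D_anti hδ1 x y) X
  exact ⟨le_antisymm h1.1 h2.1, le_antisymm h1.2 h2.2⟩

/-- For a subshift `X` with finite separation numbers, the lower and
upper box dimensions of `[X]` in the Besicovitch space `([Σ],D_δ)` do not depend on
`δ ∈ (0,1]`, and the lower/upper amorphic complexity of `(X,σ)` equals the lower/upper
box dimension of `[X]` (taken with respect to `D_1`). -/
theorem amorphic_complexity_eq_boxDim_besicovitch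
    {A : Type} [Fintype A] [TopologicalSpace A] [DiscreteTopology A]
    (X : Set (ℤ → A)) (hne : X.Nonempty) (hcl : IsClosed X) (hinv : shift '' X = X)
    (hfin : ∀ δ : ℝ, 0 < δ → ∀ ν : ℝ, 0 < ν → ν ≤ 1 → sepNum cantorDist shift X δ ν ≠ ⊤) :
    (∀ δ δ' : ℝ, 0 < δ → δ ≤ 1 → 0 < δ' → δ' ≤ 1 →
      lowerBoxDim (Ddelta cantorDist δ) X = lowerBoxDim (Ddelta cantorDist δ') X ∧
      upperBoxDim (Ddelta cantorDist δ) X = upperBoxDim (Ddelta cantorDist δ') X) ∧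
    acLower cantorDist shift X = lowerBoxDim (Ddelta cantorDist 1) X ∧
    acUpper cantorDist shift X = upperBoxDim (Ddelta cantorDist 1) X := by
  refine ⟨fun δ δ' h1 h2 h3 h4 => ?_, ?_, ?_⟩
  · have a := bes_dim_eq_one h1 h2 X
    have b := bes_dim_eq_one h3 h4 X
    exact ⟨a.1.trans b.1.symm, a.2.trans b.2.symm⟩
  · refine le_antisymm (iSup₂_le fun δ hδ => (bes_dim_le_one hδ X).1) ?_
    exact le_iSup₂_of_le (1 : ℝ) one_pos le_rfl
  · refine le_antisymm (iSup₂_le fun δ hδ => (bes_dim_le_one hδ X).2) ?_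
    exact le_iSup₂_of_le (1 : ℝ) one_pos le_rfl
end

section
/- Let (X,σ) be a subshift of Σ = A^ℤ with the Cantor metric. Then (X,σ) is mean equicontinuous if and only if the quotient map x ↦ [x], from X to the Besicovitch space ([Σ],D_1), restricted to X is continuous. -/
open Filter Topology Set MeasureTheory
open scoped ENNReal

namespace MeanEqHelper

lemma avg_bdd (f : ℕ → ℝ) (h0 : ∀ k, 0 ≤ f k) (h1 : ∀ k, f k ≤ 1) (n : ℕ) :
    0 ≤ (∑ k ∈ Finset.range n, f k) / n ∧ (∑ k ∈ Finset.range n, f k) / n ≤ 1 := by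
  have hs : (∑ k ∈ Finset.range n, f k) ≤ n := by
    calc (∑ k ∈ Finset.range n, f k) ≤ ∑ k ∈ Finset.range n, (1 : ℝ) :=
          Finset.sum_le_sum (fun k _ => h1 k)
      _ = n := by simp
  exact ⟨div_nonneg (Finset.sum_nonneg (fun k _ => h0 k)) (Nat.cast_nonneg n),
    div_le_one_of_le₀ hs (Nat.cast_nonneg n)⟩

lemma avg_ev_lt (f : ℕ → ℝ) (h0 : ∀ k, 0 ≤ f k) (h1 : ∀ k, f k ≤ 1) {c : ℝ}
    (h : limsup (fun n : ℕ => (∑ k ∈ Finset.range n, f k) / n) atTop < c) :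
    ∀ᶠ n : ℕ in atTop, (∑ k ∈ Finset.range n, f k) / n < c :=
  eventually_lt_of_limsup_lt h
    (isBoundedUnder_of ⟨1, fun n => (avg_bdd f h0 h1 n).2⟩)

lemma avg_limsup_le (f : ℕ → ℝ) (h0 : ∀ k, 0 ≤ f k) (h1 : ∀ k, f k ≤ 1) {c : ℝ}
    (h : ∀ᶠ n : ℕ in atTop, (∑ k ∈ Finset.range n, f k) / n ≤ c) :
    limsup (fun n : ℕ => (∑ k ∈ Finset.range n, f k) / n) atTop ≤ c :=
  limsup_le_of_le
    (IsBoundedUnder.isCoboundedUnder_le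
      (isBoundedUnder_of ⟨0, fun n => (avg_bdd f h0 h1 n).1⟩)) h

variable {A : Type}

open scoped Classical in
noncomputable def dif (x y : ℤ → A) (i : ℤ) : ℝ := if x i = y i then 0 else 1

lemma dif_nonneg (x y : ℤ → A) (i : ℤ) : 0 ≤ dif x y i := by
  unfold dif; split_ifs <;> norm_num

lemma dif_le (x y : ℤ → A) (i : ℤ) : dif x y i ≤ 1 := by
  unfold dif; split_ifs <;> norm_num

lemma dif_tri (x y z : ℤ → A) (i : ℤ) : dif y z i ≤ dif x y i + dif x z i := by
  by_cases h2 : x i = y i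
  · by_cases h3 : x i = z i
    · simp [dif, ← h2, ← h3]
    · have := dif_le y z i
      have h5 := dif_nonneg x y i
      have h6 : dif x z i = 1 := by simp only [dif, if_neg h3]
      linarith
  · have h4 := dif_le y z i
    have h5 := dif_nonneg x z i
    have h6 : dif x y i = 1 := by simp [dif, h2]
    linarith

lemma besD1_eq (x y : ℤ → A) : besD1 x y =
    limsup (fun n : ℕ => (∑ k ∈ Finset.range n, dif x y (k : ℤ)) / n) atTop := by
  unfold besD1 upperDensity
  congr 1
  funext n
  congr 1
  refine Finset.sum_congr rfl (fun k _ => ?_)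
  by_cases h : x k = y k <;> simp [dif, Set.indicator, h]

lemma shift_iter (x : ℤ → A) (k : ℕ) (i : ℤ) : shift^[k] x i = x (i + k) := by
  induction k generalizing i with
  | zero => simp
  | succ k ih =>
    rw [Function.iterate_succ_apply', shift, ih]
    congr 1; push_cast; ring

lemma cd_nonneg (x y : ℤ → A) : 0 ≤ cantorDist x y := by
  unfold cantorDist; split_ifs <;> positivity

lemma cd_le_one (x y : ℤ → A) : cantorDist x y ≤ 1 := by
  unfold cantorDist
  split_ifs
  · norm_num
  · rw [zpow_neg, zpow_natCast]
    exact inv_le_one_of_one_le₀ (one_le_pow₀ (by norm_num))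

lemma cd_ge {x y : ℤ → A} {N : ℕ} {k : ℤ} (hk : k.natAbs ≤ N) (h : x k ≠ y k) :
    ((2 : ℝ) ^ N)⁻¹ ≤ cantorDist x y := by
  have hxy : x ≠ y := fun e => h (by rw [e])
  unfold cantorDist
  rw [if_neg hxy, zpow_neg, zpow_natCast]
  have hle : sInf {n : ℕ | ∃ k : ℤ, k.natAbs = n ∧ x k ≠ y k} ≤ N :=
    le_trans (Nat.sInf_le (show k.natAbs ∈ {n : ℕ | ∃ k : ℤ, k.natAbs = n ∧ x k ≠ y k} from
      ⟨k, rfl, h⟩)) hk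
  gcongr
  norm_num

lemma cd_le {x y : ℤ → A} {N : ℕ} (h : ∀ k : ℤ, k.natAbs ≤ N → x k = y k) :
    cantorDist x y ≤ ((2 : ℝ) ^ N)⁻¹ := by
  unfold cantorDist
  split_ifs with hxy
  · positivity
  · rw [zpow_neg, zpow_natCast]
    have hne : {n : ℕ | ∃ k : ℤ, k.natAbs = n ∧ x k ≠ y k}.Nonempty := by
      obtain ⟨k, hk⟩ := Function.ne_iff.mp hxy
      exact ⟨_, k, rfl, hk⟩
    obtain ⟨k, hk, hk'⟩ := Nat.sInf_mem hne
    have : N ≤ sInf {n : ℕ | ∃ k : ℤ, k.natAbs = n ∧ x k ≠ y k} := by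
      by_contra hlt
      exact hk' (h k (by omega))
    gcongr
    norm_num

lemma exists_pow_lt {δ : ℝ} (h : 0 < δ) : ∃ N : ℕ, ((2 : ℝ) ^ N)⁻¹ < δ := by
  obtain ⟨N, hN⟩ := exists_pow_lt_of_lt_one h (by norm_num : (1 / 2 : ℝ) < 1)
  exact ⟨N, by simpa using hN⟩

lemma dif_le_cd (x y : ℤ → A) (k : ℕ) :
    dif x y k ≤ cantorDist (shift^[k] x) (shift^[k] y) := by
  unfold dif
  split_ifs with h
  · exact cd_nonneg _ _
  · have := cd_ge (x := shift^[k] x) (y := shift^[k] y) (N := 0) (k := 0) (by simp)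
      (by simpa [shift_iter] using h)
    simpa using this

lemma cd_le_sum (x y : ℤ → A) (m k : ℕ) :
    cantorDist (shift^[k] x) (shift^[k] y) ≤
      ((2 : ℝ) ^ m)⁻¹ + ∑ j ∈ Finset.Icc (-(m : ℤ)) m, dif x y (k + j) := by
  by_cases h : ∀ j : ℤ, j.natAbs ≤ m → shift^[k] x j = shift^[k] y j
  · exact (cd_le h).trans
      (le_add_of_nonneg_right (Finset.sum_nonneg (fun _ _ => dif_nonneg _ _ _)))
  · push Not at h
    obtain ⟨j, hj, hne⟩ := h
    have hmem : j ∈ Finset.Icc (-(m : ℤ)) m := by rw [Finset.mem_Icc]; omega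
    have h1 : dif x y (k + j) = 1 := by
      rw [shift_iter, shift_iter, add_comm] at hne
      simp [dif, hne]
    have h2 := Finset.single_le_sum (f := fun j : ℤ => dif x y (k + j))
      (fun i _ => dif_nonneg x y (k + i)) hmem
    simp only [h1] at h2
    have h3 := cd_le_one (shift^[k] x) (shift^[k] y)
    have h4 : (0 : ℝ) ≤ ((2 : ℝ) ^ m)⁻¹ := by positivity
    linarith

lemma sum_step (x y : ℤ → A) (n : ℕ) (j : ℤ) :
    ∑ k ∈ Finset.range n, dif x y (k + (j + 1)) - ∑ k ∈ Finset.range n, dif x y (k + j)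
      = dif x y (n + j) - dif x y j := by
  rw [← Finset.sum_sub_distrib]
  have := Finset.sum_range_sub (fun k : ℕ => dif x y (k + j)) n
  simp only [Nat.cast_zero, zero_add] at this
  rw [← this]
  refine Finset.sum_congr rfl (fun k _ => ?_)
  congr 2; push_cast; ring

lemma sum_shift_le (x y : ℤ → A) (n : ℕ) (j : ℤ) :
    ∑ k ∈ Finset.range n, dif x y (k + j) ≤
      ∑ k ∈ Finset.range n, dif x y (k : ℤ) + |(j : ℝ)| := by
  induction j using Int.induction_on with
  | zero => simp
  | succ i ih =>
    have := sum_step x y n i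
    have h1 := dif_le x y (n + i)
    have h2 := dif_nonneg x y i
    rw [abs_of_nonneg (by positivity)] at ih ⊢
    push_cast at *
    linarith
  | pred i ih =>
    have := sum_step x y n (-(i : ℤ) - 1)
    rw [sub_add_cancel] at this
    have h1 := dif_nonneg x y (n + (-(i : ℤ) - 1))
    have h2 := dif_le x y (-(i : ℤ) - 1)
    have hi : (0 : ℝ) ≤ i := by positivity
    push_cast at *
    rw [abs_of_nonpos (by linarith)] at ih ⊢
    linarith

lemma total_le (x y : ℤ → A) (m n : ℕ) :
    ∑ k ∈ Finset.range n, cantorDist (shift^[k] x) (shift^[k] y) ≤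
      n * ((2 : ℝ) ^ m)⁻¹ + (2 * m + 1) * (∑ k ∈ Finset.range n, dif x y (k : ℤ) + m) := by
  calc ∑ k ∈ Finset.range n, cantorDist (shift^[k] x) (shift^[k] y)
      ≤ ∑ k ∈ Finset.range n,
        (((2 : ℝ) ^ m)⁻¹ + ∑ j ∈ Finset.Icc (-(m : ℤ)) m, dif x y (k + j)) :=
        Finset.sum_le_sum (fun k _ => cd_le_sum x y m k)
    _ = n * ((2 : ℝ) ^ m)⁻¹ +
        ∑ j ∈ Finset.Icc (-(m : ℤ)) m, ∑ k ∈ Finset.range n, dif x y (k + j) := by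
        rw [Finset.sum_add_distrib, Finset.sum_comm]; simp
    _ ≤ n * ((2 : ℝ) ^ m)⁻¹ +
        ∑ j ∈ Finset.Icc (-(m : ℤ)) m, (∑ k ∈ Finset.range n, dif x y (k : ℤ) + m) := by
        gcongr with j hj
        refine (sum_shift_le x y n j).trans ?_
        gcongr
        rw [Finset.mem_Icc] at hj
        have : |j| ≤ m := abs_le.mpr hj
        exact_mod_cast this
    _ = _ := by
        rw [Finset.sum_const, Int.card_Icc, nsmul_eq_mul]
        have : ((m : ℤ) + 1 - -(m : ℤ)).toNat = 2 * m + 1 := by omega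
        rw [this]; push_cast; ring

lemma unif [Fintype A] [TopologicalSpace A] [DiscreteTopology A]
    (X : Set (ℤ → A)) (hcl : IsClosed X)
    (H : ∀ x ∈ X, ∀ ε : ℝ, 0 < ε → ∃ δ : ℝ, 0 < δ ∧
        ∀ y ∈ X, cantorDist x y < δ → besD1 x y < ε) (ε : ℝ) (hε : 0 < ε) :
    ∃ N : ℕ, ∀ x ∈ X, ∀ y ∈ X, (∀ k : ℤ, k.natAbs ≤ N → x k = y k) →
      ∀ᶠ n : ℕ in atTop, (∑ k ∈ Finset.range n, dif x y (k : ℤ)) / n < ε := by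
  have H' : ∀ x ∈ X, ∃ N : ℕ, ∀ y ∈ X, (∀ k : ℤ, k.natAbs ≤ N → x k = y k) →
      ∀ᶠ n : ℕ in atTop, (∑ k ∈ Finset.range n, dif x y (k : ℤ)) / n < ε / 2 := by
    intro x hx
    obtain ⟨δ, hδ, h⟩ := H x hx (ε / 2) (by linarith)
    obtain ⟨N, hN⟩ := exists_pow_lt hδ
    refine ⟨N, fun y hy hk => ?_⟩
    have := h y hy ((cd_le hk).trans_lt hN)
    rw [besD1_eq] at this
    exact avg_ev_lt (fun k => dif x y k) (fun k => dif_nonneg _ _ _) (fun k => dif_le _ _ _) this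
  choose! N hN using H'
  let U : (ℤ → A) → Set (ℤ → A) := fun x => {y | ∀ k : ℤ, k.natAbs ≤ N x → x k = y k}
  have hU : ∀ x, IsOpen (U x) := by
    intro x
    have hfin : (Set.Icc (-(N x : ℤ)) (N x)).Finite := Set.finite_Icc _ _
    have : U x = Set.pi (Set.Icc (-(N x : ℤ)) (N x)) (fun k => {x k}) := by
      ext y
      simp only [U, Set.mem_ofPred_eq, Set.mem_pi, Set.mem_Icc, Set.mem_singleton_iff]
      exact ⟨fun h k hk => (h k (by omega)).symm, fun h k hk => (h k (by omega)).symm⟩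
    rw [this]
    exact isOpen_set_pi hfin (fun _ _ => isOpen_discrete _)
  obtain ⟨t, ht⟩ := hcl.isCompact.elim_nhds_subcover' (fun x _ => U x)
    (fun x _ => (hU x).mem_nhds (fun _ _ => rfl))
  refine ⟨t.sup (fun x => N x), fun y hy z hz hyz => ?_⟩
  obtain ⟨x, hxt, hyx⟩ := Set.mem_iUnion₂.mp (ht hy)
  have hle : N x ≤ t.sup (fun x => N x) := Finset.le_sup (f := fun x : X => N x) hxt
  have e1 := hN x x.2 y hy hyx
  have e2 := hN x x.2 z hz (fun k hk => (hyx k hk).trans (hyz k (hk.trans hle)))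
  filter_upwards [e1, e2] with n h1 h2
  have h3 : (∑ k ∈ Finset.range n, dif y z (k : ℤ)) / n ≤
      (∑ k ∈ Finset.range n, dif x y (k : ℤ)) / n +
      (∑ k ∈ Finset.range n, dif x z (k : ℤ)) / n := by
    rw [← add_div, ← Finset.sum_add_distrib]
    gcongr with k hk
    exact dif_tri _ _ _ _
  linarith

end MeanEqHelper

open MeanEqHelper in
/-- A subshift `(X,σ)` is mean equicontinuous if and only if the
quotient map `x ↦ [x]` into the Besicovitch space `([Σ],D_1)` is continuous on `X`. -/
theorem mean_equicontinuous_iff_quotient_map_continuous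
    {A : Type} [Fintype A] [TopologicalSpace A] [DiscreteTopology A]
    (X : Set (ℤ → A)) (hne : X.Nonempty) (hcl : IsClosed X) (hinv : shift '' X = X) :
    MeanEquicontinuousOn cantorDist shift X ↔
      ∀ x ∈ X, ∀ ε : ℝ, 0 < ε → ∃ δ : ℝ, 0 < δ ∧
        ∀ y ∈ X, cantorDist x y < δ → besD1 x y < ε := by
  constructor
  · intro H x hx ε hε
    obtain ⟨δ, hδ, h⟩ := H (ε / 2) (by linarith)
    refine ⟨δ, hδ, fun y hy hxy => ?_⟩
    have h1 := avg_ev_lt (fun k => cantorDist (shift^[k] x) (shift^[k] y))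
      (fun k => cd_nonneg _ _) (fun k => cd_le_one _ _) (h x hx y hy hxy)
    rw [besD1_eq]
    refine (avg_limsup_le (fun k => dif x y k) (fun k => dif_nonneg _ _ _)
      (fun k => dif_le _ _ _) (c := ε / 2) ?_).trans_lt (by linarith)
    filter_upwards [h1] with n hn
    refine le_trans ?_ hn.le
    gcongr with k hk
    exact dif_le_cd x y k
  · intro H ν hν
    obtain ⟨m, hm⟩ := exists_pow_lt (show (0 : ℝ) < ν / 4 by linarith)
    have hM : (0 : ℝ) < 2 * m + 1 := by positivity
    obtain ⟨N, hN⟩ := unif X hcl H (ν / 4 / (2 * m + 1)) (by positivity)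
    refine ⟨((2 : ℝ) ^ N)⁻¹, by positivity, fun x hx y hy hxy => ?_⟩
    have h1 := hN x hx y hy (fun k hk => by
      by_contra hne
      exact absurd (cd_ge hk hne) (not_le.mpr hxy))
    have h2 : ∀ᶠ n : ℕ in atTop, ((2 * m + 1) * m : ℝ) / n < ν / 4 :=
      (tendsto_const_div_atTop_nhds_zero_nat _).eventually_lt_const (by linarith)
    refine (avg_limsup_le (fun k => cantorDist (shift^[k] x) (shift^[k] y))
      (fun k => cd_nonneg _ _) (fun k => cd_le_one _ _) (c := 3 * ν / 4) ?_).trans_lt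
      (by linarith)
    filter_upwards [h1, h2, eventually_gt_atTop 0] with n hn1 hn2 hn
    have hn' : (0 : ℝ) < n := by exact_mod_cast hn
    have h3 := total_le x y m n
    rw [lt_div_iff₀ hM, div_mul_eq_mul_div, div_lt_iff₀ hn'] at hn1
    rw [div_lt_iff₀ hn'] at hn2
    rw [div_le_iff₀ hn']
    have h4 : n * ((2 : ℝ) ^ m)⁻¹ ≤ n * (ν / 4) := by gcongr
    linarith
end

section
/- Let X and Y be minimal subshifts of the full shift Σ = A^ℤ. If there exist x ∈ X and y ∈ Y with D_1(x,y) = 0 (i.e. [X] ∩ [Y] ≠ ∅ in the Besicovitch space), then X = Y. -/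
open Filter Topology Set MeasureTheory
open scoped ENNReal

/-- If the upper density of `E` vanishes, then `E` has arbitrarily long gaps. -/
theorem exists_gap_of_upperDensity_eq_zero (E : Set ℕ) (hE : upperDensity E = 0) (L : ℕ)
    (hL : 0 < L) : ∃ m : ℕ, ∀ i < L, m + i ∉ E := by
  classical
  by_contra! hcon
  have hcount : ∀ k : ℕ, (k : ℝ) ≤
      ∑ j ∈ Finset.range (L * k), E.indicator (fun _ => (1 : ℝ)) j := by
    intro k
    induction k with
    | zero => simp
    | succ k ih =>
      rw [Nat.mul_succ, Finset.sum_range_add]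
      obtain ⟨i, hi, hiE⟩ := hcon (L * k)
      have h1 : (1 : ℝ) ≤ ∑ j ∈ Finset.range L, E.indicator (fun _ => (1 : ℝ)) (L * k + j) := by
        have h2 := Finset.single_le_sum
          (f := fun j => E.indicator (fun _ => (1 : ℝ)) (L * k + j)) (s := Finset.range L)
          (fun j _ => Set.indicator_nonneg (fun _ _ => zero_le_one) _)
          (Finset.mem_range.mpr hi)
        simpa [hiE] using h2
      push_cast
      linarith
  have hLr : (0 : ℝ) < L := by exact_mod_cast hL
  have hbdd : IsBoundedUnder (· ≤ ·) atTop (fun n : ℕ =>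
      (∑ k ∈ Finset.range n, E.indicator (fun _ => (1 : ℝ)) k) / n) := by
    refine isBoundedUnder_of ⟨1, fun n => ?_⟩
    refine div_le_one_of_le₀ ?_ (Nat.cast_nonneg n)
    calc _ ≤ ∑ k ∈ Finset.range n, (1 : ℝ) := Finset.sum_le_sum fun k _ =>
            Set.indicator_le_self' (fun _ _ => zero_le_one) k
      _ = n := by simp
  have hlt : upperDensity E < 1 / (L : ℝ) := by rw [hE]; positivity
  have hev := eventually_lt_of_limsup_lt hlt hbdd
  obtain ⟨N, hN⟩ := eventually_atTop.mp hev
  have h1 := hN (L * (N + 1)) (by nlinarith)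
  have h2 := hcount (N + 1)
  have hpos : (0 : ℝ) < ((L * (N + 1) : ℕ) : ℝ) := by positivity
  rw [div_lt_div_iff₀ hpos hLr] at h1
  push_cast at h1 h2
  nlinarith

theorem shift_iterate_apply {A : Type*} (x : ℤ → A) (m : ℕ) (n : ℤ) :
    shift^[m] x n = x (n + m) := by
  induction m generalizing x with
  | zero => simp
  | succ m ih =>
    rw [Function.iterate_succ_apply, ih]
    simp only [shift]
    congr 1
    push_cast
    ring

theorem shift_injective {A : Type*} : Function.Injective (shift : (ℤ → A) → ℤ → A) := by
  intro x y h
  funext n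
  simpa [shift] using congrFun h (n - 1)

theorem shift_iterate_mem {A : Type*} {X : Set (ℤ → A)} (hX : shift '' X = X) {x : ℤ → A}
    (hx : x ∈ X) (m : ℕ) : shift^[m] x ∈ X := by
  induction m with
  | zero => simpa
  | succ m ih =>
    rw [Function.iterate_succ_apply', ← hX]
    exact mem_image_of_mem _ ih

/-- If two minimal subshifts `X`, `Y` contain points `x ∈ X`, `y ∈ Y`
with `D_1(x,y) = 0` (i.e. `[X] ∩ [Y] ≠ ∅` in the Besicovitch space), then `X = Y`. -/
theorem minimal_subshifts_eq_of_besicovitch_classes_meet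
    {A : Type} [Fintype A] [TopologicalSpace A] [DiscreteTopology A]
    (X Y : Set (ℤ → A))
    (hXne : X.Nonempty) (hXcl : IsClosed X) (hXinv : shift '' X = X)
    (hXmin : ∀ E ⊆ X, E.Nonempty → IsClosed E → shift '' E = E → E = X)
    (hYne : Y.Nonempty) (hYcl : IsClosed Y) (hYinv : shift '' Y = Y)
    (hYmin : ∀ E ⊆ Y, E.Nonempty → IsClosed E → shift '' E = E → E = Y)
    (x : ℤ → A) (hx : x ∈ X) (y : ℤ → A) (hy : y ∈ Y) (hD : besD1 x y = 0) :
    X = Y := by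
  have hagree : ∀ N : ℕ, ∃ p ∈ X ×ˢ Y, ∀ n : ℤ, n.natAbs ≤ N → p.1 n = p.2 n := by
    intro N
    obtain ⟨m, hm⟩ := exists_gap_of_upperDensity_eq_zero _ hD (2 * N + 1) (by omega)
    refine ⟨(shift^[m + N] x, shift^[m + N] y),
      ⟨shift_iterate_mem hXinv hx _, shift_iterate_mem hYinv hy _⟩, fun n hn => ?_⟩
    have h1 := hm (n + N).toNat (by omega)
    simp only [Set.mem_ofPred_eq, not_not] at h1
    have h2 : ((m + (n + N).toNat : ℕ) : ℤ) = n + ((m + N : ℕ) : ℤ) := by omega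
    rw [h2] at h1
    simpa only [shift_iterate_apply] using h1
  have hne : (⋂ N : ℕ, {p : (ℤ → A) × (ℤ → A) | p ∈ X ×ˢ Y ∧
      ∀ n : ℤ, n.natAbs ≤ N → p.1 n = p.2 n}).Nonempty := by
    have hcl : ∀ N : ℕ, IsClosed {p : (ℤ → A) × (ℤ → A) | p ∈ X ×ˢ Y ∧
        ∀ n : ℤ, n.natAbs ≤ N → p.1 n = p.2 n} := by
      intro N
      have h3 : {p : (ℤ → A) × (ℤ → A) | p ∈ X ×ˢ Y ∧
          ∀ n : ℤ, n.natAbs ≤ N → p.1 n = p.2 n} =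
          (X ×ˢ Y) ∩ ⋂ n : ℤ, ⋂ _ : n.natAbs ≤ N, {p | p.1 n = p.2 n} := by
        ext p
        simp
      rw [h3]
      refine (hXcl.prod hYcl).inter ?_
      refine isClosed_iInter fun n => isClosed_iInter fun _ => isClosed_eq ?_ ?_
      · fun_prop
      · fun_prop
    refine IsCompact.nonempty_iInter_of_sequence_nonempty_isCompact_isClosed _ ?_ ?_
      (hcl 0).isCompact hcl
    · exact fun N p hp => ⟨hp.1, fun n hn => hp.2 n (by omega)⟩
    · intro N
      obtain ⟨p, hp, h⟩ := hagree N
      exact ⟨p, hp, h⟩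
  obtain ⟨⟨u, v⟩, huv⟩ := hne
  simp only [Set.mem_iInter, Set.mem_ofPred_eq] at huv
  have huv' : u = v := funext fun n => (huv n.natAbs).2 n le_rfl
  subst huv'
  have hmem : u ∈ X ∩ Y := (huv 0).1
  have hinv : shift '' (X ∩ Y) = X ∩ Y := by
    rw [Set.image_inter shift_injective, hXinv, hYinv]
  have e1 := hXmin (X ∩ Y) inter_subset_left ⟨u, hmem⟩ (hXcl.inter hYcl) hinv
  have e2 := hYmin (X ∩ Y) inter_subset_right ⟨u, hmem⟩ (hXcl.inter hYcl) hinv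
  exact e1.symm.trans e2
end

section
/- Let θ : A → A^ℓ be a substitution of constant length ℓ over a finite alphabet A, extended to A^ℤ, and let c(θ) = min_{a≠b} #{0 ≤ j < ℓ : θ(a)_j = θ(b)_j} and C(θ) = max_{a≠b} #{0 ≤ j < ℓ : θ(a)_j = θ(b)_j}. Then for all x,y ∈ A^ℤ: ((ℓ − C(θ))/ℓ)·D_1(x,y) ≤ D_1(θ(x),θ(y)) ≤ ((ℓ − c(θ))/ℓ)·D_1(x,y). -/
open Filter Topology Set MeasureTheory
open scoped ENNReal

/-- Letterwise mismatch indicator at a block. -/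
lemma sb_block {A : Type} {ℓ : ℕ} (hℓ : 0 < ℓ) (θ : A → Fin ℓ → A) (x y : ℤ → A) (n : ℕ) :
    ∑ i ∈ Finset.range ℓ, ({k : ℕ | substApply hℓ θ x (k : ℤ) ≠ substApply hℓ θ y (k : ℤ)}).indicator
      (fun _ => (1 : ℝ)) (ℓ * n + i) = (ℓ : ℝ) - coincCount θ (x n) (y n) := by
  classical
  rw [Finset.sum_range]
  have h : ∀ i : Fin ℓ, ({k : ℕ | substApply hℓ θ x (k : ℤ) ≠ substApply hℓ θ y (k : ℤ)}).indicator
      (fun _ => (1 : ℝ)) (ℓ * n + i) = 1 - if θ (x n) i = θ (y n) i then 1 else 0 := by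
    intro i
    have hl : (ℓ : ℤ) ≠ 0 := by exact_mod_cast hℓ.ne'
    have hi : ((i : ℕ) : ℤ) < ℓ := by exact_mod_cast i.2
    have h1 : ((ℓ * n + i : ℕ) : ℤ) / (ℓ : ℤ) = n := by
      push_cast
      rw [Int.mul_add_ediv_left _ _ hl, Int.ediv_eq_zero_of_lt (by positivity) hi, add_zero]
    have h2 : ((ℓ * n + i : ℕ) : ℤ) % (ℓ : ℤ) = i := by
      push_cast
      rw [Int.mul_add_emod_self_left, Int.emod_eq_of_lt (by positivity) hi]
    have h3 : ∀ z : ℤ → A, substApply hℓ θ z ((ℓ * n + i : ℕ) : ℤ) = θ (z n) i := by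
      intro z
      unfold substApply
      congr 1
      · rw [h1]
      · ext
        simp only [h2, Int.toNat_natCast]
    rw [Set.indicator_apply]
    simp only [Set.mem_setOf_eq, h3]
    split_ifs <;> simp_all
  rw [Finset.sum_congr rfl (fun i _ => h i), Finset.sum_sub_distrib]
  simp [coincCount]

/-- Mismatch count. -/
noncomputable def sbCnt (E : Set ℕ) (n : ℕ) : ℝ := ∑ k ∈ Finset.range n, E.indicator (fun _ => (1 : ℝ)) k

lemma sbCnt_nonneg (E : Set ℕ) (n : ℕ) : 0 ≤ sbCnt E n :=
  Finset.sum_nonneg fun _ _ => Set.indicator_nonneg (fun _ _ => zero_le_one) _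

lemma sbCnt_add_le (E : Set ℕ) (n m : ℕ) : sbCnt E (n + m) ≤ sbCnt E n + m := by
  unfold sbCnt
  rw [Finset.sum_range_add]
  gcongr
  calc _ ≤ ∑ k ∈ Finset.range m, (1 : ℝ) :=
        Finset.sum_le_sum fun k _ => Set.indicator_le_self' (fun _ _ => zero_le_one) _
    _ = m := by simp

lemma sbCnt_le (E : Set ℕ) (n : ℕ) : sbCnt E n ≤ n := by
  have := sbCnt_add_le E 0 n
  simpa [sbCnt] using this

lemma sb_div_nonneg (E : Set ℕ) (n : ℕ) : 0 ≤ sbCnt E n / n :=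
  div_nonneg (sbCnt_nonneg E n) (Nat.cast_nonneg n)

lemma sb_div_le (E : Set ℕ) (n : ℕ) : sbCnt E n / n ≤ 1 :=
  div_le_one_of_le₀ (sbCnt_le E n) (Nat.cast_nonneg n)

lemma sb_ud_lt (E : Set ℕ) {a : ℝ} (h : upperDensity E < a) :
    ∀ᶠ n : ℕ in atTop, sbCnt E n / n < a :=
  eventually_lt_of_limsup_lt h (isBoundedUnder_of ⟨1, sb_div_le E⟩)

lemma sb_ud_le (E : Set ℕ) {a : ℝ} (h : ∀ᶠ n : ℕ in atTop, sbCnt E n / n ≤ a) :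
    upperDensity E ≤ a :=
  limsup_le_of_le (isBoundedUnder_of ⟨0, sb_div_nonneg E⟩ :
    IsBoundedUnder (· ≥ ·) atTop fun n : ℕ => sbCnt E n / n).isCoboundedUnder_le h

lemma sb_ud_nonneg (E : Set ℕ) : 0 ≤ upperDensity E := by
  by_contra h
  push Not at h
  obtain ⟨n, hn⟩ := (sb_ud_lt E h).exists
  exact absurd (sb_div_nonneg E n) (not_le.2 hn)

lemma sb_coinc_le {A : Type} {ℓ : ℕ} (θ : A → Fin ℓ → A) (a b : A) : coincCount θ a b ≤ ℓ := by
  classical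
  unfold coincCount
  exact (Finset.card_le_univ _).trans (by simp)

lemma sb_coinc_self {A : Type} {ℓ : ℕ} (θ : A → Fin ℓ → A) (a : A) : coincCount θ a a = ℓ := by
  simp [coincCount]

lemma sb_counts {A : Type} {ℓ : ℕ} (hℓ : 0 < ℓ) (θ : A → Fin ℓ → A) (x y : ℤ → A) (n : ℕ) :
    ((ℓ : ℝ) - cMax θ) * sbCnt {k : ℕ | x (k : ℤ) ≠ y (k : ℤ)} n ≤
      sbCnt {k : ℕ | substApply hℓ θ x (k : ℤ) ≠ substApply hℓ θ y (k : ℤ)} (ℓ * n) ∧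
    sbCnt {k : ℕ | substApply hℓ θ x (k : ℤ) ≠ substApply hℓ θ y (k : ℤ)} (ℓ * n) ≤
      ((ℓ : ℝ) - cMin θ) * sbCnt {k : ℕ | x (k : ℤ) ≠ y (k : ℤ)} n := by
  induction n with
  | zero => simp [sbCnt]
  | succ n ih =>
    have e1 : sbCnt {k : ℕ | substApply hℓ θ x (k : ℤ) ≠ substApply hℓ θ y (k : ℤ)} (ℓ * (n + 1))
      = sbCnt {k : ℕ | substApply hℓ θ x (k : ℤ) ≠ substApply hℓ θ y (k : ℤ)} (ℓ * n)
        + ((ℓ : ℝ) - coincCount θ (x n) (y n)) := by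
      rw [← sb_block hℓ, mul_add, mul_one, sbCnt, Finset.sum_range_add, sbCnt]
    have e2 : sbCnt {k : ℕ | x (k : ℤ) ≠ y (k : ℤ)} (n + 1) =
        sbCnt {k : ℕ | x (k : ℤ) ≠ y (k : ℤ)} n +
        ({k : ℕ | x (k : ℤ) ≠ y (k : ℤ)}).indicator (fun _ => (1 : ℝ)) n := by
      rw [sbCnt, Finset.sum_range_succ, sbCnt]
    rw [e1, e2, mul_add, mul_add]
    by_cases hxy : x n = y n
    · have : n ∉ {k : ℕ | x (k : ℤ) ≠ y (k : ℤ)} := by simp [hxy]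
      rw [Set.indicator_of_notMem this, hxy, sb_coinc_self]
      simpa using ih
    · have : n ∈ {k : ℕ | x (k : ℤ) ≠ y (k : ℤ)} := hxy
      rw [Set.indicator_of_mem this]
      have h1 : cMin θ ≤ coincCount θ (x n) (y n) := Nat.sInf_le ⟨_, _, hxy, rfl⟩
      have h2 : coincCount θ (x n) (y n) ≤ cMax θ :=
        le_csSup ⟨ℓ, by rintro _ ⟨a, b, _, rfl⟩; exact sb_coinc_le θ a b⟩ ⟨_, _, hxy, rfl⟩
      have h1' : (cMin θ : ℝ) ≤ coincCount θ (x n) (y n) := by exact_mod_cast h1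
      have h2' : (coincCount θ (x n) (y n) : ℝ) ≤ cMax θ := by exact_mod_cast h2
      constructor <;> linarith [ih.1, ih.2]

lemma sb_lower (E F : Set ℕ) (ℓ : ℕ) (hℓ : 0 < ℓ) (r : ℝ) (hr : 0 ≤ r)
    (h : ∀ n, r * sbCnt E n ≤ sbCnt F (ℓ * n)) : r / ℓ * upperDensity E ≤ upperDensity F := by
  have hl : (0 : ℝ) < ℓ := by exact_mod_cast hℓ
  rcases hr.eq_or_lt with rfl | hr
  · simpa using sb_ud_nonneg F
  refine le_of_forall_pos_le_add fun ε hε => ?_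
  have hp : 0 < r / ℓ := div_pos hr hl
  rw [mul_comm, ← le_div_iff₀ hp]
  apply sb_ud_le
  have ht : Tendsto (fun n : ℕ => ℓ * n) atTop atTop := tendsto_id.const_mul_atTop' hℓ
  have := ht.eventually (sb_ud_lt F (show upperDensity F < upperDensity F + ε by linarith))
  filter_upwards [this, eventually_gt_atTop 0] with n hn h0
  have hn0 : (0 : ℝ) < n := by exact_mod_cast h0
  rw [le_div_iff₀ hp]
  refine le_trans ?_ hn.le
  push_cast
  rw [div_mul_div_comm, mul_comm (sbCnt E n), mul_comm (n : ℝ)]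
  gcongr
  exact h n

lemma sb_upper (E F : Set ℕ) (ℓ : ℕ) (hℓ : 0 < ℓ) (r : ℝ) (hr : 0 ≤ r)
    (h : ∀ n, sbCnt F (ℓ * n) ≤ r * sbCnt E n) : upperDensity F ≤ r / ℓ * upperDensity E := by
  have hl : (0 : ℝ) < ℓ := by exact_mod_cast hℓ
  have hp : 0 ≤ r / ℓ := div_nonneg hr hl.le
  have key : ∀ ε : ℝ, 0 < ε → upperDensity F ≤ r / ℓ * (upperDensity E + ε) + ε := by
    intro ε hε
    apply sb_ud_le
    have ht : Tendsto (fun m : ℕ => m / ℓ) atTop atTop := Nat.tendsto_div_const_atTop hℓ.ne'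
    have h1 := ht.eventually (sb_ud_lt E (show upperDensity E < upperDensity E + ε by linarith))
    have h2 : ∀ᶠ m : ℕ in atTop, (ℓ : ℝ) / m < ε :=
      (tendsto_const_div_atTop_nhds_zero_nat (ℓ : ℝ)).eventually_lt_const hε
    filter_upwards [h1, h2, eventually_ge_atTop ℓ] with m h1 h2 hm
    have hq : 0 < m / ℓ := Nat.div_pos hm hℓ
    have hq' : (0 : ℝ) < ((m / ℓ : ℕ) : ℝ) := by exact_mod_cast hq
    have hm0 : (0 : ℝ) < m := by exact_mod_cast hℓ.trans_le hm
    have hle : (ℓ : ℝ) * ((m / ℓ : ℕ) : ℝ) ≤ m := by exact_mod_cast Nat.mul_div_le m ℓ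
    have hT : sbCnt F m ≤ r * sbCnt E (m / ℓ) + ℓ := by
      have a := sbCnt_add_le F (ℓ * (m / ℓ)) (m % ℓ)
      rw [Nat.div_add_mod] at a
      have b : ((m % ℓ : ℕ) : ℝ) ≤ ℓ := by exact_mod_cast (Nat.mod_lt m hℓ).le
      linarith [h (m / ℓ)]
    calc sbCnt F m / m ≤ (r * sbCnt E (m / ℓ) + ℓ) / m := by gcongr
      _ = r * sbCnt E (m / ℓ) / m + ℓ / m := add_div _ _ _
      _ ≤ r * sbCnt E (m / ℓ) / (ℓ * ((m / ℓ : ℕ) : ℝ)) + ε := by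
          have := sbCnt_nonneg E (m / ℓ)
          gcongr
      _ = r / ℓ * (sbCnt E (m / ℓ) / ((m / ℓ : ℕ) : ℝ)) + ε := by rw [div_mul_div_comm]
      _ ≤ _ := by gcongr
  refine le_of_forall_pos_le_add fun ε hε => ?_
  have hs : 0 < r / ℓ + 1 := by linarith
  have := key (ε / (r / ℓ + 1)) (div_pos hε hs)
  have e : r / ℓ * (upperDensity E + ε / (r / ℓ + 1)) + ε / (r / ℓ + 1)
      = r / ℓ * upperDensity E + (r / ℓ + 1) * (ε / (r / ℓ + 1)) := by ring
  rw [e, mul_div_cancel₀ _ hs.ne'] at this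
  exact this

/-- For a constant length substitution `θ` of length `ℓ` over a finite
alphabet with at least two letters, and for all `x,y ∈ A^ℤ`,
`((ℓ - C(θ))/ℓ)·D_1(x,y) ≤ D_1(θ(x),θ(y)) ≤ ((ℓ - c(θ))/ℓ)·D_1(x,y)`. -/
theorem substitution_besicovitch_contraction_bounds
    {A : Type} [Fintype A] (hA : ∃ a b : A, a ≠ b)
    {ℓ : ℕ} (hℓ : 0 < ℓ) (θ : A → Fin ℓ → A) :
    ∀ x y : ℤ → A,
      ((ℓ : ℝ) - cMax θ) / ℓ * besD1 x y ≤
        besD1 (substApply hℓ θ x) (substApply hℓ θ y) ∧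
      besD1 (substApply hℓ θ x) (substApply hℓ θ y) ≤
        ((ℓ : ℝ) - cMin θ) / ℓ * besD1 x y := by


  intro x y
  obtain ⟨a, b, hab⟩ := hA
  have hC : cMax θ ≤ ℓ := by
    apply csSup_le (show Set.Nonempty {n : ℕ | ∃ a b : A, a ≠ b ∧ coincCount θ a b = n} from ⟨_, a, b, hab, rfl⟩)
    rintro _ ⟨a, b, _, rfl⟩
    exact sb_coinc_le θ a b
  have hc : cMin θ ≤ ℓ := (show cMin θ ≤ coincCount θ a b from Nat.sInf_le ⟨a, b, hab, rfl⟩).trans (sb_coinc_le θ a b)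
  have hC' : (cMax θ : ℝ) ≤ ℓ := by exact_mod_cast hC
  have hc' : (cMin θ : ℝ) ≤ ℓ := by exact_mod_cast hc
  exact ⟨sb_lower _ _ ℓ hℓ _ (sub_nonneg.2 hC') fun n => (sb_counts hℓ θ x y n).1,
    sb_upper _ _ ℓ hℓ _ (sub_nonneg.2 hc') fun n => (sb_counts hℓ θ x y n).2⟩
end

section
/- Let θ : A → A^ℓ be a substitution of constant length ℓ over a finite alphabet A with at least two letters, regarded as a map on the Besicovitch space [Σ] via θ([x]) = [θ(x)]. Then θ is a contraction on ([Σ],D_1) (i.e. there exists r < 1 with D_1(θ(x),θ(y)) ≤ r·D_1(x,y) for all x,y ∈ A^ℤ) if and only if c(θ) > 0. -/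
open Filter Topology Set MeasureTheory
open scoped ENNReal

/-- Counting function of a set. -/
noncomputable def cntE (E : Set ℕ) (n : ℕ) : ℝ := ∑ k ∈ Finset.range n, E.indicator (fun _ => (1 : ℝ)) k

lemma cntE_nonneg (E : Set ℕ) (n : ℕ) : 0 ≤ cntE E n :=
  Finset.sum_nonneg fun k _ => Set.indicator_nonneg (fun _ _ => zero_le_one) k

lemma cntE_mono (E : Set ℕ) {m n : ℕ} (h : m ≤ n) : cntE E m ≤ cntE E n :=
  Finset.sum_le_sum_of_subset_of_nonneg (by simpa using h)
    fun k _ _ => Set.indicator_nonneg (fun _ _ => zero_le_one) k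

lemma cntE_add_le (E : Set ℕ) (m n : ℕ) : cntE E (m + n) ≤ cntE E m + n := by
  unfold cntE
  rw [Finset.sum_range_add]
  gcongr
  calc _ ≤ ∑ k ∈ Finset.range n, (1 : ℝ) :=
        Finset.sum_le_sum fun k _ => Set.indicator_le_self' (fun _ _ => zero_le_one) _
    _ = n := by simp

lemma cntE_le (E : Set ℕ) (n : ℕ) : cntE E n ≤ n := by
  have := cntE_add_le E 0 n
  simpa [cntE] using this

lemma ratio_nonneg (E : Set ℕ) (n : ℕ) : 0 ≤ cntE E n / n :=
  div_nonneg (cntE_nonneg E n) n.cast_nonneg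

lemma ratio_le (E : Set ℕ) (n : ℕ) : cntE E n / n ≤ 1 :=
  div_le_one_of_le₀ (cntE_le E n) n.cast_nonneg

lemma upperDensity_univ : upperDensity Set.univ = 1 := by
  unfold upperDensity
  apply Tendsto.limsup_eq
  apply tendsto_const_nhds.congr'
  filter_upwards [eventually_gt_atTop 0] with n hn
  have : (n : ℝ) ≠ 0 := by positivity
  simp [this]

lemma eventually_of_upperDensity_lt (E : Set ℕ) (d : ℝ) (h : upperDensity E < d) :
    ∀ᶠ n : ℕ in atTop, cntE E n / n < d :=
  eventually_lt_of_limsup_lt h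
    (isBoundedUnder_of ⟨1, fun n => ratio_le E n⟩)

lemma upperDensity_le (E : Set ℕ) (d : ℝ) (h : ∀ᶠ n : ℕ in atTop, cntE E n / n ≤ d) :
    upperDensity E ≤ d :=
  limsup_le_of_le (isCoboundedUnder_le_of_le atTop (x := 0) fun n => ratio_nonneg E n) h

lemma substApply_block {A : Type*} {ℓ : ℕ} (hℓ : 0 < ℓ) (θ : A → Fin ℓ → A)
    (x : ℤ → A) (q : ℕ) (i : Fin ℓ) :
    substApply hℓ θ x ((ℓ * q + i : ℕ) : ℤ) = θ (x q) i := by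
  unfold substApply
  have h1 : ((ℓ * q + i : ℕ) : ℤ) / (ℓ : ℤ) = q := by
    rw [← Int.natCast_div, Nat.mul_add_div hℓ, Nat.div_eq_of_lt i.2, add_zero]
  have h2 : (((ℓ * q + i : ℕ) : ℤ) % (ℓ : ℤ)).toNat = i := by
    rw [← Int.natCast_mod, Int.toNat_natCast, Nat.mul_add_mod, Nat.mod_eq_of_lt i.2]
  congr 1
  · rw [h1]
  · exact Fin.ext h2

lemma block_le {A : Type*} {ℓ : ℕ} (hℓ : 0 < ℓ) (θ : A → Fin ℓ → A)
    (hc : ∀ a b : A, a ≠ b → 0 < coincCount θ a b) (x y : ℤ → A) (q : ℕ) :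
    cntE {k : ℕ | substApply hℓ θ x k ≠ substApply hℓ θ y k} (ℓ * q) ≤
      ((ℓ : ℝ) - 1) * cntE {k : ℕ | x k ≠ y k} q := by
  classical
  induction q with
  | zero => simp [cntE]
  | succ q ih =>
    unfold cntE at ih ⊢
    rw [Nat.mul_succ, Finset.sum_range_add, Finset.sum_range_succ, mul_add]
    refine add_le_add ih ?_
    rw [Finset.sum_range]
    simp only [Set.indicator_apply, Set.mem_ofPred_eq, substApply_block]
    by_cases h : x q = y q
    · simp [h]
    · have h1 := hc _ _ h
      have h2 : (Finset.univ.filter fun j : Fin ℓ => θ (x q) j = θ (y q) j).card +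
          (Finset.univ.filter fun j : Fin ℓ => ¬ θ (x q) j = θ (y q) j).card = ℓ := by
        rw [Finset.card_filter_add_card_filter_not]; simp
      have h3 : coincCount θ (x q) (y q) =
          (Finset.univ.filter fun j : Fin ℓ => θ (x q) j = θ (y q) j).card := by
        unfold coincCount; congr
      rw [Finset.sum_boole, if_pos h, mul_one, le_sub_iff_add_le]
      rw [h3] at h1
      have h4 : (Finset.univ.filter fun j : Fin ℓ => ¬ θ (x q) j = θ (y q) j).card + 1 ≤ ℓ := by
        omega
      exact_mod_cast h4

/-- A constant length substitution `θ`, acting on the Besicovitch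
space `([Σ],D_1)`, is a contraction if and only if `c(θ) > 0`. -/
theorem substitution_besicovitch_contraction_iff
    {A : Type} [Fintype A] (hA : ∃ a b : A, a ≠ b)
    {ℓ : ℕ} (hℓ : 0 < ℓ) (θ : A → Fin ℓ → A) :
    (∃ r : ℝ, r < 1 ∧ ∀ x y : ℤ → A,
        besD1 (substApply hℓ θ x) (substApply hℓ θ y) ≤ r * besD1 x y) ↔
      0 < cMin θ := by
  constructor
  · rintro ⟨r, hr, h⟩
    rw [Nat.pos_iff_ne_zero]
    intro h0
    obtain ⟨a, b, hab⟩ := hA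
    have hne : {n : ℕ | ∃ a b : A, a ≠ b ∧ coincCount θ a b = n}.Nonempty :=
      ⟨_, a, b, hab, rfl⟩
    obtain ⟨a, b, hab, hc⟩ := Nat.sInf_mem hne
    have hc0 : coincCount θ a b = 0 := hc.trans h0
    have hθ : ∀ j, θ a j ≠ θ b j := by
      intro j
      classical
      unfold coincCount at hc0
      have h1 := Finset.card_eq_zero.mp hc0
      intro hj
      exact Finset.notMem_empty j (h1 ▸ Finset.mem_filter.mpr ⟨Finset.mem_univ j, hj⟩)
    have := h (fun _ => a) (fun _ => b)
    have e1 : {k : ℕ | (fun _ : ℤ => a) (k : ℤ) ≠ (fun _ : ℤ => b) (k : ℤ)} = Set.univ := by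
      ext k; simp [hab]
    have e2 : {k : ℕ | substApply hℓ θ (fun _ => a) (k : ℤ) ≠
        substApply hℓ θ (fun _ => b) (k : ℤ)} = Set.univ := by
      ext k; simp [substApply, hθ]
    unfold besD1 at this
    rw [e1, e2, upperDensity_univ] at this
    linarith
  · intro h
    have hc : ∀ a b : A, a ≠ b → 0 < coincCount θ a b := fun a b hab =>
      h.trans_le (Nat.sInf_le ⟨a, b, hab, rfl⟩)
    have hl : (0 : ℝ) < ℓ := by exact_mod_cast hℓ
    have hl1 : (1 : ℝ) ≤ ℓ := by exact_mod_cast hℓ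
    refine ⟨((ℓ : ℝ) - 1) / ℓ, by rw [div_lt_one hl]; linarith, fun x y => ?_⟩
    have hr0 : 0 ≤ ((ℓ : ℝ) - 1) / ℓ := div_nonneg (by linarith) hl.le
    have hr1 : ((ℓ : ℝ) - 1) / ℓ ≤ 1 := by rw [div_le_one hl]; linarith
    refine le_of_forall_pos_le_add fun ε hε => ?_
    set D := besD1 x y with hD
    have hev := eventually_of_upperDensity_lt {k : ℕ | x k ≠ y k} (D + ε / 2)
      (by change D < _; linarith)
    have hev' := (Nat.tendsto_div_const_atTop hℓ.ne').eventually hev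
    have hbig : ∀ᶠ n : ℕ in atTop, (ℓ : ℝ) / n < ε / 2 :=
      (tendsto_const_div_atTop_nhds_zero_nat (ℓ : ℝ)).eventually_lt_const (by linarith)
    apply upperDensity_le
    filter_upwards [hev', hbig, eventually_ge_atTop ℓ] with n h1 h2 h3
    have hn : (0 : ℝ) < n := by exact_mod_cast hℓ.trans_le h3
    have hq : (0 : ℝ) < (n / ℓ : ℕ) := by exact_mod_cast Nat.div_pos h3 hℓ
    have hqn : ((n / ℓ : ℕ) : ℝ) ≤ n / ℓ := Nat.cast_div_le
    have hd : 0 ≤ D + ε / 2 := (ratio_nonneg _ _).trans h1.le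
    rw [div_lt_iff₀ hq] at h1
    have h4 := cntE_add_le {k : ℕ | substApply hℓ θ x k ≠ substApply hℓ θ y k}
      (ℓ * (n / ℓ)) (n % ℓ)
    rw [Nat.div_add_mod] at h4
    have h5 := block_le hℓ θ hc x y (n / ℓ)
    have h6 : ((n % ℓ : ℕ) : ℝ) ≤ ℓ := by exact_mod_cast (Nat.mod_lt n hℓ).le
    rw [div_lt_iff₀ hn] at h2
    rw [div_le_iff₀ hn]
    have h7 : ((ℓ : ℝ) - 1) * cntE {k : ℕ | x k ≠ y k} (n / ℓ) ≤
        ((ℓ : ℝ) - 1) * ((D + ε / 2) * (n / ℓ)) :=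
      mul_le_mul_of_nonneg_left (h1.le.trans (mul_le_mul_of_nonneg_left hqn hd)) (by linarith)
    have h8 : ((ℓ : ℝ) - 1) * ((D + ε / 2) * (n / ℓ)) =
        ((ℓ : ℝ) - 1) / ℓ * D * n + ((ℓ : ℝ) - 1) / ℓ * (ε / 2 * n) := by ring
    have h9 : ((ℓ : ℝ) - 1) / ℓ * (ε / 2 * n) ≤ 1 * (ε / 2 * n) :=
      mul_le_mul_of_nonneg_right hr1 (by positivity)
    linarith
end
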